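/- arXiv:1403.4164 — 9 statements merged into one kernel-verified Lean document; each statement's English description precedes it below -/
import Mathlib

section
/- Let r, w, y ∈ Z and η, ϑ ∈ E* satisfy w = P_r^J(η), y = P_r^J(ϑ), and ‖ϑ − η‖_*² ≤ L²‖w − r‖² + M² for some constants L, M ≥ 0. Then for every u ∈ Z, ⟨ϑ, w − u⟩ + J(w) − J(u) ≤ V(r, u) − V(y, u) − (μ/2 − L²/(2μ))‖r − w‖² + M²/(2μ). -/
theorem prox_aux
    {E : Type*} [NormedAddCommGroup E] [NormedSpace ℝ E]
    (Z : Set E) (hZcv : Convex ℝ Z) (μ : ℝ) (hμ : 0 < μ)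
    (ω : E → ℝ) (Dω : E → E →L[ℝ] ℝ) (hωcont : ContinuousOn Dω Z)
    (V : E → E → ℝ) (hV : ∀ z u, V z u = ω u - ω z - Dω z (u - z))
    (hVlb : ∀ z ∈ Z, ∀ u ∈ Z, μ / 2 * ‖u - z‖ ^ 2 ≤ V z u)
    (J : E → ℝ) (hJ : ConvexOn ℝ Z J)
    (r p : E) (hpZ : p ∈ Z) (ζ : E →L[ℝ] ℝ)
    (hp : IsMinOn (fun u => ζ (u - r) + V r u + J u) Z p) (u : E) (hu : u ∈ Z) :
    ζ (p - u) + J p - J u ≤ V r u - V p u - V r p := by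
  have hmem : ∀ t ∈ Set.Ioo (0:ℝ) 1, p + t • (u - p) ∈ Z := fun t ht =>
    hZcv.add_smul_sub_mem hpZ hu ⟨ht.1.le, ht.2.le⟩
  have hIoo : Set.Ioo (0:ℝ) 1 ∈ nhdsWithin (0:ℝ) (Set.Ioi 0) := Ioo_mem_nhdsGT one_pos
  have hlim : Filter.Tendsto (fun t : ℝ => p + t • (u - p)) (nhdsWithin 0 (Set.Ioi 0))
      (nhdsWithin p Z) := by
    refine tendsto_nhdsWithin_iff.2 ⟨?_, Filter.mem_of_superset hIoo hmem⟩
    have : Continuous (fun t : ℝ => p + t • (u - p)) := by fun_prop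
    have h := this.tendsto 0
    simp only [zero_smul, add_zero] at h
    exact h.mono_left nhdsWithin_le_nhds
  have hD : Filter.Tendsto (fun t : ℝ => Dω (p + t • (u - p)) (u - p))
      (nhdsWithin 0 (Set.Ioi 0)) (nhds (Dω p (u - p))) :=
    (((ContinuousLinearMap.apply ℝ ℝ (u - p)).continuous.tendsto (Dω p)).comp
      ((hωcont p hpZ).tendsto.comp hlim))
  have key : ζ (p - u) + J p - J u + Dω r (u - p) ≤ Dω p (u - p) := by
    refine ge_of_tendsto hD (Filter.mem_of_superset hIoo fun t ht => ?_)
    have hx := hmem t ht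
    have h1 := hp hx
    have h2 := hVlb _ hx p hpZ
    have h3 : J (p + t • (u - p)) ≤ (1 - t) * J p + t * J u := by
      have := hJ.2 hpZ hu (sub_nonneg.2 ht.2.le) ht.1.le (by ring)
      have e : (1 - t) • p + t • u = p + t • (u - p) := by module
      simpa [e] using this
    have h4 : 0 ≤ μ / 2 * ‖p - (p + t • (u - p))‖ ^ 2 := by positivity
    simp only [Set.mem_setOf_eq, hV, map_sub, map_add, map_smul, smul_eq_mul] at h1 h2 ⊢
    have ht0 := ht.1
    refine le_of_mul_le_mul_left ?_ ht0
    nlinarith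
  simp only [hV, map_sub] at key ⊢
  linarith

/-- recursion property of two prox-mappings from the same center. -/
theorem prox_mapping_recursion
    {E : Type*} [NormedAddCommGroup E] [NormedSpace ℝ E] [FiniteDimensional ℝ E]
    (Z : Set E) (hZne : Z.Nonempty) (hZcl : IsClosed Z) (hZcv : Convex ℝ Z)
    (μ : ℝ) (hμ : 0 < μ)
    (ω : E → ℝ) (Dω : E → E →L[ℝ] ℝ)
    (hωdiff : ∀ z ∈ Z, HasFDerivWithinAt ω (Dω z) Z z)
    (hωcont : ContinuousOn Dω Z)
    (hωsc : StrongConvexOn Z μ ω)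
    (V : E → E → ℝ) (hV : ∀ z u, V z u = ω u - ω z - Dω z (u - z))
    (hVlb : ∀ z ∈ Z, ∀ u ∈ Z, μ / 2 * ‖u - z‖ ^ 2 ≤ V z u)
    (J : E → ℝ) (hJ : ConvexOn ℝ Z J)
    (r w y : E) (hrZ : r ∈ Z) (hwZ : w ∈ Z) (hyZ : y ∈ Z)
    (η ϑ : E →L[ℝ] ℝ) (L M : ℝ) (hL : 0 ≤ L) (hM : 0 ≤ M)
    (hw : IsMinOn (fun u => η (u - r) + V r u + J u) Z w)
    (hy : IsMinOn (fun u => ϑ (u - r) + V r u + J u) Z y)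
    (hLM : ‖ϑ - η‖ ^ 2 ≤ L ^ 2 * ‖w - r‖ ^ 2 + M ^ 2) :
    ∀ u ∈ Z, ϑ (w - u) + J w - J u ≤
      V r u - V y u - (μ / 2 - L ^ 2 / (2 * μ)) * ‖r - w‖ ^ 2 + M ^ 2 / (2 * μ) := by
  intro u hu
  have h1 := prox_aux Z hZcv μ hμ ω Dω hωcont V hV hVlb J hJ r w hwZ η hw y hyZ
  have h2 := prox_aux Z hZcv μ hμ ω Dω hωcont V hV hVlb J hJ r y hyZ ϑ hy u hu
  have h3 := hVlb w hwZ y hyZ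
  have h4 := hVlb r hrZ w hwZ
  have h5 : (ϑ - η) (w - y) ≤ ‖ϑ - η‖ * ‖y - w‖ := by
    rw [norm_sub_rev y w]
    exact (le_abs_self _).trans ((ϑ - η).le_opNorm (w - y))
  have h6 : ‖ϑ - η‖ * ‖y - w‖ ≤ (L ^ 2 * ‖w - r‖ ^ 2 + M ^ 2) / (2 * μ) + μ / 2 * ‖y - w‖ ^ 2 := by
    have : ‖ϑ - η‖ * ‖y - w‖ ≤ ‖ϑ - η‖ ^ 2 / (2 * μ) + μ / 2 * ‖y - w‖ ^ 2 := by
      have e : ‖ϑ - η‖ ^ 2 / (2 * μ) + μ / 2 * ‖y - w‖ ^ 2 - ‖ϑ - η‖ * ‖y - w‖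
          = (‖ϑ - η‖ - μ * ‖y - w‖) ^ 2 / (2 * μ) := by
        field_simp
        ring
      have : 0 ≤ (‖ϑ - η‖ - μ * ‖y - w‖) ^ 2 / (2 * μ) := by positivity
      linarith
    have h7 : ‖ϑ - η‖ ^ 2 / (2 * μ) ≤ (L ^ 2 * ‖w - r‖ ^ 2 + M ^ 2) / (2 * μ) := by gcongr
    linarith
  rw [norm_sub_rev r w]
  have e : (L ^ 2 * ‖w - r‖ ^ 2 + M ^ 2) / (2 * μ)
      = L ^ 2 / (2 * μ) * ‖w - r‖ ^ 2 + M ^ 2 / (2 * μ) := by ring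
  have e2 : (ϑ - η) (w - y) = ϑ w - ϑ y - η w + η y := by
    simp only [ContinuousLinearMap.sub_apply, map_sub]
    ring
  simp only [map_sub] at h1 h2 ⊢
  linarith
end

section
/- Let r, w, y ∈ Z and η, ϑ ∈ E* satisfy w = P_r^J(η), y = P_r^J(ϑ), and ‖ϑ − η‖_*² ≤ L²‖w − r‖² + M² for some constants L, M ≥ 0. Then V(y, w) ≤ (L²/μ²)·V(r, w) + M²/(2μ). -/
theorem prox_opt_aux
    {E : Type*} [NormedAddCommGroup E] [NormedSpace ℝ E]
    (Z : Set E) (hZcv : Convex ℝ Z)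
    (ω : E → ℝ) (D : E →L[ℝ] ℝ) (y u r : E) (hyZ : y ∈ Z) (huZ : u ∈ Z)
    (hω : HasFDerivWithinAt ω D Z y)
    (V : E → E → ℝ) (Dr : E →L[ℝ] ℝ) (hV : ∀ u, V r u = ω u - ω r - Dr (u - r))
    (J : E → ℝ) (hJ : ConvexOn ℝ Z J) (ϑ : E →L[ℝ] ℝ)
    (hy : IsMinOn (fun u => ϑ (u - r) + V r u + J u) Z y) :
    0 ≤ ϑ (u - y) + D (u - y) - Dr (u - y) + (J u - J y) := by
  have hmem : ∀ t ∈ Set.Icc (0:ℝ) 1, y + t • (u - y) ∈ Z := fun t ht =>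
    hZcv.add_smul_sub_mem hyZ huZ ht
  have hd1 : HasDerivWithinAt (fun t : ℝ => y + t • (u - y)) (u - y) (Set.Icc 0 1) 0 := by
    have h := ((hasDerivAt_id (0:ℝ)).smul_const (u - y)).const_add y
    simpa using h.hasDerivWithinAt
  have hd2 : HasDerivWithinAt (fun t : ℝ => ω (y + t • (u - y))) (D (u - y)) (Set.Icc 0 1) 0 := by
    have hω' : HasFDerivWithinAt ω D Z ((fun t : ℝ => y + t • (u - y)) 0) := by simpa using hω
    exact hω'.comp_hasDerivWithinAt (0:ℝ) hd1 hmem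
  rw [hasDerivWithinAt_iff_tendsto_slope, Set.Icc_diff_left,
    nhdsWithin_Ioc_eq_nhdsGT (zero_lt_one)] at hd2
  have key : -(ϑ (u - y) - Dr (u - y) + (J u - J y)) ≤ D (u - y) := by
    refine ge_of_tendsto hd2 ?_
    filter_upwards [Ioc_mem_nhdsGT (zero_lt_one : (0:ℝ) < 1)] with t ht
    have h1 := hy (hmem t ⟨ht.1.le, ht.2⟩)
    have h2 := hJ.2 hyZ huZ (sub_nonneg.2 ht.2) ht.1.le (by ring)
    have e : (1 - t) • y + t • u = y + t • (u - y) := by module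
    rw [e] at h2
    simp only [Set.mem_setOf_eq, hV, smul_eq_mul, map_add, map_sub, map_smul] at h1 h2 ⊢
    rw [slope_def_field, le_div_iff₀ (by linarith [ht.1])]
    simp only [zero_smul, add_zero, sub_zero]
    nlinarith
  linarith

/-- Bregman-distance bound between two prox-mappings from the same center. -/
theorem prox_mapping_bregman_bound
    {E : Type*} [NormedAddCommGroup E] [NormedSpace ℝ E] [FiniteDimensional ℝ E]
    (Z : Set E) (hZne : Z.Nonempty) (hZcl : IsClosed Z) (hZcv : Convex ℝ Z)
    (μ : ℝ) (hμ : 0 < μ)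
    (ω : E → ℝ) (Dω : E → E →L[ℝ] ℝ)
    (hωdiff : ∀ z ∈ Z, HasFDerivWithinAt ω (Dω z) Z z)
    (hωcont : ContinuousOn Dω Z)
    (hωsc : StrongConvexOn Z μ ω)
    (V : E → E → ℝ) (hV : ∀ z u, V z u = ω u - ω z - Dω z (u - z))
    (hVlb : ∀ z ∈ Z, ∀ u ∈ Z, μ / 2 * ‖u - z‖ ^ 2 ≤ V z u)
    (J : E → ℝ) (hJ : ConvexOn ℝ Z J)
    (r w y : E) (hrZ : r ∈ Z) (hwZ : w ∈ Z) (hyZ : y ∈ Z)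
    (η ϑ : E →L[ℝ] ℝ) (L M : ℝ) (hL : 0 ≤ L) (hM : 0 ≤ M)
    (hw : IsMinOn (fun u => η (u - r) + V r u + J u) Z w)
    (hy : IsMinOn (fun u => ϑ (u - r) + V r u + J u) Z y)
    (hLM : ‖ϑ - η‖ ^ 2 ≤ L ^ 2 * ‖w - r‖ ^ 2 + M ^ 2) :
    V y w ≤ L ^ 2 / μ ^ 2 * V r w + M ^ 2 / (2 * μ) := by
  have a := prox_opt_aux Z hZcv ω (Dω y) y w r hyZ hwZ (hωdiff y hyZ) V (Dω r) (hV r) J hJ ϑ hy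
  have b := prox_opt_aux Z hZcv ω (Dω w) w y r hwZ hyZ (hωdiff w hwZ) V (Dω r) (hV r) J hJ η hw
  have c := hVlb w hwZ y hyZ
  have d := hVlb r hrZ w hwZ
  have n := (le_abs_self _).trans ((ϑ - η).le_opNorm (w - y))
  have e := hV y w
  have e' := hV w y
  rw [norm_sub_rev y w] at c
  have h1 : V y w ≤ ‖ϑ - η‖ * ‖w - y‖ - μ / 2 * ‖w - y‖ ^ 2 := by
    simp only [ContinuousLinearMap.sub_apply, map_sub] at *
    linarith
  have h2 : ‖ϑ - η‖ * ‖w - y‖ - μ / 2 * ‖w - y‖ ^ 2 ≤ ‖ϑ - η‖ ^ 2 / (2 * μ) := by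
    rw [le_div_iff₀ (by positivity)]
    nlinarith [sq_nonneg (‖ϑ - η‖ - μ * ‖w - y‖)]
  have h3 : ‖ϑ - η‖ ^ 2 / (2 * μ) ≤ (L ^ 2 * ‖w - r‖ ^ 2 + M ^ 2) / (2 * μ) := by gcongr
  have h4 : L ^ 2 / μ ^ 2 * (μ / 2 * ‖w - r‖ ^ 2) ≤ L ^ 2 / μ ^ 2 * V r w := by gcongr
  have h5 : (L ^ 2 * ‖w - r‖ ^ 2 + M ^ 2) / (2 * μ)
      = L ^ 2 / μ ^ 2 * (μ / 2 * ‖w - r‖ ^ 2) + M ^ 2 / (2 * μ) := by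
    field_simp
  linarith
end

section
/- Let {r_t}_{t≥1} and {w_t}_{t≥1} be arbitrary sequences in Z, let α_t ∈ [0,1], and define w_1^{ag} = w_1 and, for t ≥ 1, w_t^{md} = (1−α_t) w_t^{ag} + α_t r_t and w_{t+1}^{ag} = (1−α_t) w_t^{ag} + α_t w_{t+1}. Then for every t ≥ 1 and every u ∈ Z, Q(w_{t+1}^{ag}, u) − (1−α_t) Q(w_t^{ag}, u) ≤ α_t⟨∇G(w_t^{md}), w_{t+1} − u⟩ + (L_G α_t²/2)‖w_{t+1} − r_t‖² + α_t⟨H(w_{t+1}), w_{t+1} − u⟩ + α_t J(w_{t+1}) − α_t J(u). -/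
open Finset in
/-- one-step recursion for the function `Q` along the aggregate iterates. -/
theorem Q_one_step_recursion
    {E : Type*} [NormedAddCommGroup E] [NormedSpace ℝ E] [FiniteDimensional ℝ E]
    (Z : Set E) (hZne : Z.Nonempty) (hZcl : IsClosed Z) (hZcv : Convex ℝ Z)
    (J : E → ℝ) (hJ : ConvexOn ℝ Z J)
    (G : E → ℝ) (DG : E → E →L[ℝ] ℝ) (LG : ℝ) (hLG : 0 ≤ LG)
    (hGsmooth : ∀ v ∈ Z, ∀ x ∈ Z, G v ≤ G x + DG x (v - x) + LG / 2 * ‖v - x‖ ^ 2)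
    (hGcvx : ∀ v ∈ Z, ∀ x ∈ Z, G x + DG x (v - x) ≤ G v)
    (H : E → E →L[ℝ] ℝ) (LH : ℝ) (hLH : 0 ≤ LH)
    (hHmono : ∀ v ∈ Z, ∀ x ∈ Z, 0 ≤ (H x - H v) (x - v))
    (hHlip : ∀ v ∈ Z, ∀ x ∈ Z, ‖H x - H v‖ ≤ LH * ‖x - v‖)
    (Q : E → E → ℝ)
    (hQ : ∀ a b, Q a b = G a - G b + (H b) (a - b) + J a - J b)
    (α : ℕ → ℝ) (hαrange : ∀ t ≥ 1, 0 ≤ α t ∧ α t ≤ 1)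
    (r w wag wmd : ℕ → E)
    (hrZ : ∀ t ≥ 1, r t ∈ Z) (hwZ : ∀ t ≥ 1, w t ∈ Z)
    (hwag1 : wag 1 = w 1)
    (hwmd : ∀ t ≥ 1, wmd t = (1 - α t) • wag t + α t • r t)
    (hwagrec : ∀ t ≥ 1, wag (t+1) = (1 - α t) • wag t + α t • w (t+1)) :
    ∀ t ≥ 1, ∀ u ∈ Z,
      Q (wag (t+1)) u - (1 - α t) * Q (wag t) u ≤
        α t * (DG (wmd t)) (w (t+1) - u) + LG * α t ^ 2 / 2 * ‖w (t+1) - r t‖ ^ 2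
          + α t * (H (w (t+1))) (w (t+1) - u) + α t * J (w (t+1)) - α t * J u := by
  have hag : ∀ t ≥ 1, wag t ∈ Z := by
    intro t ht
    induction t, ht using Nat.le_induction with
    | base => rw [hwag1]; exact hwZ 1 le_rfl
    | succ n hn ih =>
      rw [hwagrec n hn]
      exact hZcv ih (hwZ _ (by omega)) (by linarith [(hαrange n hn).2]) (hαrange n hn).1 (by ring)
  intro t ht u hu
  obtain ⟨h0, h1⟩ := hαrange t ht
  have h1' : 0 ≤ 1 - α t := by linarith
  have hw' := hwZ (t+1) (by omega)
  have hagt := hag t ht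
  have hag' := hag (t+1) (by omega)
  have hmd : wmd t ∈ Z := by
    rw [hwmd t ht]
    exact hZcv hagt (hrZ t ht) h1' h0 (by ring)
  have e1 : wag (t+1) - wmd t = α t • (w (t+1) - r t) := by
    rw [hwagrec t ht, hwmd t ht]; module
  have e2 : ‖wag (t+1) - wmd t‖ ^ 2 = α t ^ 2 * ‖w (t+1) - r t‖ ^ 2 := by
    rw [e1, norm_smul, mul_pow, Real.norm_eq_abs, sq_abs]
  have e3 : DG (wmd t) (wag (t+1) - wmd t) = (1 - α t) * DG (wmd t) (wag t - wmd t)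
      + α t * DG (wmd t) (w (t+1) - u) + α t * DG (wmd t) (u - wmd t) := by
    rw [hwagrec t ht]
    simp only [map_sub, map_add, map_smul, smul_eq_mul]; ring
  have e4 : H u (wag (t+1) - u) = (1 - α t) * H u (wag t - u) + α t * H u (w (t+1) - u) := by
    rw [hwagrec t ht]
    simp only [map_sub, map_add, map_smul, smul_eq_mul]; ring
  have g1 := hGsmooth _ hag' _ hmd
  have g2 := mul_le_mul_of_nonneg_left (hGcvx _ hagt _ hmd) h1'
  have g3 := mul_le_mul_of_nonneg_left (hGcvx _ hu _ hmd) h0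
  have g4 := mul_nonneg h0 (hHmono _ hu _ hw')
  rw [ContinuousLinearMap.sub_apply] at g4
  have g5 : J (wag (t+1)) ≤ (1 - α t) * J (wag t) + α t * J (w (t+1)) := by
    have := hJ.2 hagt hw' h1' h0 (by ring)
    rw [hwagrec t ht]; simpa only [smul_eq_mul] using this
  rw [e2, e3] at g1
  rw [hQ, hQ, e4]
  linarith
end

section
/- Suppose α_1 = 1 and 0 ≤ α_t < 1 for all t > 1. Then the AMP iterates satisfy, for every t ≥ 1 and every u ∈ Z: (1/Γ_t) Q(w_{t+1}^{ag}, u) ≤ B_t(u, r_{[t]}) − Σ_{i=1}^t (α_i/(2Γ_i γ_i)) (μ − L_G α_i γ_i − L_H² γ_i²/μ) ‖r_i − w_{i+1}‖². -/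
/-- optimality inequality of the prox-mapping -/
theorem amp_prox_ineq
    {E : Type*} [NormedAddCommGroup E] [NormedSpace ℝ E]
    (Z : Set E) (hZcv : Convex ℝ Z)
    (ω : E → ℝ) (Dω : E → E →L[ℝ] ℝ)
    (hωdiff : ∀ z ∈ Z, HasFDerivWithinAt ω (Dω z) Z z)
    (V : E → E → ℝ) (hV : ∀ z u, V z u = ω u - ω z - Dω z (u - z))
    (J : E → ℝ) (hJ : ConvexOn ℝ Z J) (g : ℝ) (hg : 0 < g) (η : E →L[ℝ] ℝ)
    (r x u : E) (hx : x ∈ Z) (hu : u ∈ Z)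
    (hmin : IsMinOn (fun u => (g • η) (u - r) + V r u + g * J u) Z x) :
    g * η (x - u) + g * J x - g * J u ≤ V r u - V x u - V r x := by
  have hmem : ∀ s ∈ Set.Icc (0:ℝ) 1, x + s • (u - x) ∈ Z := fun s hs =>
    hZcv.add_smul_sub_mem hx hu hs
  have hd1 : HasDerivWithinAt (fun s : ℝ => x + s • (u - x)) (u - x) (Set.Icc 0 1) 0 := by
    have := ((hasDerivAt_id (0:ℝ)).smul_const (u - x)).const_add x
    simpa using this.hasDerivWithinAt
  have hd2 : HasDerivWithinAt (fun s : ℝ => ω (x + s • (u - x))) (Dω x (u - x))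
      (Set.Icc 0 1) 0 := by
    have h := hωdiff x hx
    have h' : HasFDerivWithinAt ω (Dω x) Z ((fun s : ℝ => x + s • (u - x)) 0) := by
      simpa using h
    exact h'.comp_hasDerivWithinAt (0:ℝ) hd1 hmem
  set c : ℝ := g * η (u - x) - Dω r (u - x) + g * (J u - J x) with hc
  have hd3 : HasDerivWithinAt (fun s : ℝ => ω (x + s • (u - x)) + s * c)
      (Dω x (u - x) + c) (Set.Icc 0 1) 0 := by
    have := ((hasDerivAt_id (0:ℝ)).mul_const c).hasDerivWithinAt (s := Set.Icc (0:ℝ) 1)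
    have h2 := hd2.add this
    rw [one_mul] at h2
    exact h2
  have hm : IsMinOn (fun s : ℝ => ω (x + s • (u - x)) + s * c) (Set.Icc 0 1) 0 := by
    intro s hs
    have h1 := hmin (hmem s hs)
    have h2 := hJ.2 hx hu (sub_nonneg.2 hs.2) hs.1 (by ring)
    have h3 : (1 - s) • x + s • u = x + s • (u - x) := by
      rw [sub_smul, smul_sub, one_smul]; abel
    rw [h3] at h2
    have h4 := mul_le_mul_of_nonneg_left h2 hg.le
    simp only [Set.mem_setOf_eq, hV] at h1
    have h5 : x + s • (u - x) - r = (x - r) + s • (u - x) := by abel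
    rw [h5] at h1
    simp only [map_add, map_smul, ContinuousLinearMap.smul_apply, smul_eq_mul] at h1 h4
    simp only [Set.mem_setOf_eq, zero_smul, add_zero, zero_mul]
    rw [hc]
    nlinarith
  have hnn := hm.localize.hasFDerivWithinAt_nonneg hd3.hasFDerivWithinAt (y := (1:ℝ))
    (mem_posTangentConeAt_of_segment_subset (by
      rw [segment_eq_Icc (by simp)]; simp))
  have hnn' : 0 ≤ Dω x (u - x) + c := by simpa using hnn
  rw [hc] at hnn'
  simp only [hV]
  simp only [map_sub] at hnn' ⊢
  nlinarith

/-- Young step -/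
theorem amp_young (μ g L a b : ℝ) (hμ : 0 < μ) :
    g * (L * a * b) ≤ μ / 2 * b ^ 2 + L ^ 2 * g ^ 2 / μ / 2 * a ^ 2 := by
  have h : μ / 2 * b ^ 2 + L ^ 2 * g ^ 2 / μ / 2 * a ^ 2 - g * (L * a * b)
      = (μ * b - g * L * a) ^ 2 / (2 * μ) := by
    field_simp
    ring
  have : 0 ≤ (μ * b - g * L * a) ^ 2 / (2 * μ) := by positivity
  linarith

open Finset in
/-- the master bound on `Q` for the deterministic AMP method. -/
theorem amp_master_Q_bound
    {E : Type*} [NormedAddCommGroup E] [NormedSpace ℝ E] [FiniteDimensional ℝ E]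
    (Z : Set E) (hZne : Z.Nonempty) (hZcl : IsClosed Z) (hZcv : Convex ℝ Z)
    (μ : ℝ) (hμ : 0 < μ)
    (ω : E → ℝ) (Dω : E → E →L[ℝ] ℝ)
    (hωdiff : ∀ z ∈ Z, HasFDerivWithinAt ω (Dω z) Z z)
    (hωcont : ContinuousOn Dω Z)
    (hωsc : StrongConvexOn Z μ ω)
    (V : E → E → ℝ) (hV : ∀ z u, V z u = ω u - ω z - Dω z (u - z))
    (hVlb : ∀ z ∈ Z, ∀ u ∈ Z, μ / 2 * ‖u - z‖ ^ 2 ≤ V z u)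
    (J : E → ℝ) (hJ : ConvexOn ℝ Z J)
    (G : E → ℝ) (DG : E → E →L[ℝ] ℝ) (LG : ℝ) (hLG : 0 ≤ LG)
    (hGsmooth : ∀ v ∈ Z, ∀ x ∈ Z, G v ≤ G x + DG x (v - x) + LG / 2 * ‖v - x‖ ^ 2)
    (hGcvx : ∀ v ∈ Z, ∀ x ∈ Z, G x + DG x (v - x) ≤ G v)
    (H : E → E →L[ℝ] ℝ) (LH : ℝ) (hLH : 0 ≤ LH)
    (hHmono : ∀ v ∈ Z, ∀ x ∈ Z, 0 ≤ (H x - H v) (x - v))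
    (hHlip : ∀ v ∈ Z, ∀ x ∈ Z, ‖H x - H v‖ ≤ LH * ‖x - v‖)
    (Q : E → E → ℝ)
    (hQ : ∀ a b, Q a b = G a - G b + (H b) (a - b) + J a - J b)
    (α γ : ℕ → ℝ) (hαrange : ∀ t ≥ 1, 0 ≤ α t ∧ α t ≤ 1) (hγpos : ∀ t ≥ 1, 0 < γ t)
    (r w wag wmd : ℕ → E)
    (hr1Z : r 1 ∈ Z) (hw1 : w 1 = r 1) (hwag1 : wag 1 = r 1)
    (hwmd : ∀ t ≥ 1, wmd t = (1 - α t) • wag t + α t • r t)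
    (hwprox : ∀ t ≥ 1, w (t+1) ∈ Z ∧ IsMinOn
      (fun u => (γ t • (H (r t) + DG (wmd t))) (u - r t) + V (r t) u + γ t * J u) Z (w (t+1)))
    (hrprox : ∀ t ≥ 1, r (t+1) ∈ Z ∧ IsMinOn
      (fun u => (γ t • (H (w (t+1)) + DG (wmd t))) (u - r t) + V (r t) u + γ t * J u) Z (r (t+1)))
    (hwagrec : ∀ t ≥ 1, wag (t+1) = (1 - α t) • wag t + α t • w (t+1))
    (Γ : ℕ → ℝ) (hΓ1 : Γ 1 = 1) (hΓrec : ∀ t ≥ 2, Γ t = (1 - α t) * Γ (t-1))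
    (hα1 : α 1 = 1) (hαlt1 : ∀ t ≥ 2, α t < 1)
    : ∀ t ≥ 1, ∀ u ∈ Z,
      1 / Γ t * Q (wag (t+1)) u ≤
        (∑ i ∈ Finset.Icc 1 t, α i / (Γ i * γ i) * (V (r i) u - V (r (i+1)) u))
          - ∑ i ∈ Finset.Icc 1 t,
              α i / (2 * Γ i * γ i) * (μ - LG * α i * γ i - LH ^ 2 * γ i ^ 2 / μ)
                * ‖r i - w (i+1)‖ ^ 2 := by
  have hrZ : ∀ t ≥ 1, r t ∈ Z := by
    intro t ht
    obtain ⟨k, rfl⟩ : ∃ k, t = k + 1 := ⟨t - 1, by omega⟩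
    rcases Nat.eq_zero_or_pos k with rfl | hk
    · exact hr1Z
    · exact (hrprox k hk).1
  have hagZ : ∀ t ≥ 1, wag t ∈ Z := by
    intro t ht
    induction t, ht using Nat.le_induction with
    | base => rw [hwag1]; exact hr1Z
    | succ n hn ih =>
      rw [hwagrec n hn]
      exact hZcv ih (hwprox n hn).1 (sub_nonneg.2 (hαrange n hn).2) (hαrange n hn).1 (by ring)
  have hmdZ : ∀ t ≥ 1, wmd t ∈ Z := by
    intro t ht
    rw [hwmd t ht]
    exact hZcv (hagZ t ht) (hrZ t ht) (sub_nonneg.2 (hαrange t ht).2) (hαrange t ht).1 (by ring)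
  have hΓpos : ∀ t ≥ 1, 0 < Γ t := by
    intro t ht
    induction t, ht using Nat.le_induction with
    | base => rw [hΓ1]; exact one_pos
    | succ n hn ih =>
      rw [hΓrec (n+1) (by omega)]
      exact mul_pos (sub_pos.2 (hαlt1 (n+1) (by omega))) (by simpa using ih)
  have hstep : ∀ t ≥ 1, ∀ u ∈ Z, γ t * (Q (wag (t+1)) u - (1 - α t) * Q (wag t) u) ≤
      α t * (V (r t) u - V (r (t+1)) u)
       - α t / 2 * (μ - LG * α t * γ t - LH ^ 2 * γ t ^ 2 / μ) * ‖r t - w (t+1)‖ ^ 2 := by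
    intro t ht u hu
    have hg := hγpos t ht
    obtain ⟨ha0, ha1⟩ := hαrange t ht
    have hr := hrZ t ht
    have hmd := hmdZ t ht
    have hag := hagZ t ht
    have hag' := hagZ (t+1) (by omega)
    obtain ⟨hw', hwm⟩ := hwprox t ht
    obtain ⟨hr', hrm⟩ := hrprox t ht
    have p1 := amp_prox_ineq Z hZcv ω Dω hωdiff V hV J hJ (γ t) hg _ _ _ _ hw' hr' hwm
    have p2 := amp_prox_ineq Z hZcv ω Dω hωdiff V hV J hJ (γ t) hg _ _ _ _ hr' hu hrm
    have v1 := hVlb _ hw' _ hr'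
    have v2 := hVlb _ hr _ hw'
    have hl : (H (w (t+1)) - H (r t)) (w (t+1) - r (t+1)) ≤
        LH * ‖w (t+1) - r t‖ * ‖r (t+1) - w (t+1)‖ := by
      refine (le_abs_self _).trans ?_
      rw [← Real.norm_eq_abs, norm_sub_rev (r (t+1))]
      refine (ContinuousLinearMap.le_opNorm _ _).trans ?_
      exact mul_le_mul_of_nonneg_right (hHlip _ hr _ hw') (norm_nonneg _)
    have hl' := mul_le_mul_of_nonneg_left hl hg.le
    have hy := amp_young μ (γ t) LH ‖w (t+1) - r t‖ ‖r (t+1) - w (t+1)‖ hμ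
    have hmono := mul_le_mul_of_nonneg_left (hHmono _ hu _ hw') hg.le
    have key : γ t * ((H u) (w (t+1) - u) + DG (wmd t) (w (t+1) - u) + J (w (t+1)) - J u) ≤
        V (r t) u - V (r (t+1)) u
          - (μ - LH ^ 2 * γ t ^ 2 / μ) / 2 * ‖w (t+1) - r t‖ ^ 2 := by
      simp only [map_sub, ContinuousLinearMap.sub_apply, ContinuousLinearMap.add_apply]
        at p1 p2 hl' hmono ⊢
      linarith
    have hd : wag (t+1) - wmd t = α t • (w (t+1) - r t) := by
      rw [hwagrec t ht, hwmd t ht, smul_sub]; abel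
    have g1 := hGsmooth _ hag' _ hmd
    have g2 := mul_le_mul_of_nonneg_left (hGcvx _ hag _ hmd) (sub_nonneg.2 ha1)
    have g3 := mul_le_mul_of_nonneg_left (hGcvx _ hu _ hmd) ha0
    have hn : ‖wag (t+1) - wmd t‖ ^ 2 = α t ^ 2 * ‖w (t+1) - r t‖ ^ 2 := by
      rw [hd, norm_smul, mul_pow, Real.norm_eq_abs, sq_abs]
    rw [hn] at g1
    have hj := hJ.2 hag hw' (sub_nonneg.2 ha1) ha0 (by ring)
    rw [← hwagrec t ht] at hj
    simp only [smul_eq_mul] at hj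
    have hHl : (H u) (wag (t+1)) = (1 - α t) * (H u) (wag t) + α t * (H u) (w (t+1)) := by
      rw [hwagrec t ht]; simp
    have hDl : (DG (wmd t)) (wag (t+1)) =
        (1 - α t) * (DG (wmd t)) (wag t) + α t * (DG (wmd t)) (w (t+1)) := by
      rw [hwagrec t ht]; simp
    have hQs : Q (wag (t+1)) u - (1 - α t) * Q (wag t) u ≤
        α t * ((H u) (w (t+1) - u) + DG (wmd t) (w (t+1) - u) + J (w (t+1)) - J u)
          + LG / 2 * (α t ^ 2 * ‖w (t+1) - r t‖ ^ 2) := by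
      simp only [hQ, map_sub] at g1 g2 g3 ⊢
      rw [hHl]
      rw [hDl] at g1
      linarith
    have k1 := mul_le_mul_of_nonneg_left hQs hg.le
    have k2 := mul_le_mul_of_nonneg_left key ha0
    rw [norm_sub_rev (r t)]
    linarith
  have hdiv : ∀ t ≥ 1, ∀ u ∈ Z, 1 / Γ t * Q (wag (t+1)) u ≤
      (1 - α t) / Γ t * Q (wag t) u + (α t / (Γ t * γ t) * (V (r t) u - V (r (t+1)) u)
       - α t / (2 * Γ t * γ t) * (μ - LG * α t * γ t - LH ^ 2 * γ t ^ 2 / μ)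
          * ‖r t - w (t+1)‖ ^ 2) := by
    intro t ht u hu
    have hg := hγpos t ht
    have hG := hΓpos t ht
    have h := mul_le_mul_of_nonneg_left (hstep t ht u hu)
      (show 0 ≤ 1 / (Γ t * γ t) by positivity)
    generalize LH ^ 2 * γ t ^ 2 / μ = m at h ⊢
    have e1 : 1 / (Γ t * γ t) * (γ t * (Q (wag (t+1)) u - (1 - α t) * Q (wag t) u)) =
        1 / Γ t * Q (wag (t+1)) u - (1 - α t) / Γ t * Q (wag t) u := by
      field_simp
    have e2 : α t / (Γ t * γ t) = 1 / (Γ t * γ t) * α t := by ring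
    have e3 : α t / (2 * Γ t * γ t) = 1 / (Γ t * γ t) * (α t / 2) := by
      field_simp
    rw [e1] at h
    rw [e2, e3]
    linarith
  intro t ht u hu
  induction t, ht using Nat.le_induction with
  | base =>
    have h := hdiv 1 le_rfl u hu
    rw [show (1 - α 1) / Γ 1 = 0 by rw [hα1]; simp, zero_mul, zero_add] at h
    simpa using h
  | succ n hn ih =>
    have h := hdiv (n+1) (by omega) u hu
    have hc : (1 - α (n+1)) / Γ (n+1) = 1 / Γ n := by
      have h1 := hΓrec (n+1) (by omega)
      have h2 := sub_pos.2 (hαlt1 (n+1) (by omega))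
      have h3 := hΓpos n hn
      rw [Nat.add_sub_cancel] at h1
      rw [h1]
      field_simp
    rw [hc] at h
    rw [Finset.sum_Icc_succ_top (by omega), Finset.sum_Icc_succ_top (by omega)]
    linarith
end

section
/- Suppose sup_{z₁,z₂∈Z} V(z₁, z₂) ≤ Ω_Z², and the parameters satisfy α_1 = 1, 0 ≤ α_t < 1 for t > 1, μ − L_G α_t γ_t − L_H² γ_t²/μ ≥ 0 for all t ≥ 1, and α_t/(Γ_t γ_t) ≤ α_{t+1}/(Γ_{t+1} γ_{t+1}) for all t ≥ 1. Then for every t ≥ 1, g(w_{t+1}^{ag}) ≤ (α_t/γ_t) Ω_Z². -/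
theorem amp_prox_aux
    {E : Type*} [NormedAddCommGroup E] [NormedSpace ℝ E]
    (Z : Set E) (hZcv : Convex ℝ Z)
    (ω : E → ℝ) (Dω : E → E →L[ℝ] ℝ)
    (hωdiff : ∀ z ∈ Z, HasFDerivWithinAt ω (Dω z) Z z)
    (V : E → E → ℝ) (hV : ∀ z u, V z u = ω u - ω z - Dω z (u - z))
    (J : E → ℝ) (hJ : ConvexOn ℝ Z J) (c : ℝ) (hc : 0 < c)
    (η : E →L[ℝ] ℝ) (z p : E) (hp : p ∈ Z)
    (hmin : IsMinOn (fun u => (c • η) (u - z) + V z u + c * J u) Z p) (u : E) (hu : u ∈ Z) :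
    c * (η (p - u) + J p - J u) ≤ V z u - V z p - V p u := by
  set A : ℝ := c * η (u - p) - Dω z (u - p) + c * (J u - J p) with hA
  have hmem : ∀ s ∈ Set.Icc (0:ℝ) 1, p + s • (u - p) ∈ Z := by
    intro s hs
    exact hZcv.add_smul_sub_mem hp hu hs
  have hmin1 : IsMinOn (fun s : ℝ => ω (p + s • (u - p)) + s * A) (Set.Icc 0 1) 0 := by
    intro s hs
    have h1 := hmin (hmem s hs)
    simp only [Set.mem_setOf_eq] at h1 ⊢
    have hs0 := hs.1
    have hs1 := hs.2
    have hJ1 : J (p + s • (u - p)) ≤ (1 - s) * J p + s * J u := by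
      have := hJ.2 hp hu (sub_nonneg.2 hs1) hs0 (by ring)
      have e : p + s • (u - p) = (1 - s) • p + s • u := by module
      rw [e]; simpa using this
    rw [hV, hV] at h1
    have e2 : p + s • (u - p) - z = (p - z) + s • (u - p) := by module
    rw [e2] at h1
    simp only [map_add, map_smul, ContinuousLinearMap.smul_apply, smul_eq_mul] at h1
    have := mul_le_mul_of_nonneg_left hJ1 hc.le
    simp only [zero_smul, add_zero, zero_mul]
    rw [hA]
    linarith
  have hline : HasDerivWithinAt (fun s : ℝ => p + s • (u - p)) (u - p) (Set.Icc 0 1) 0 := by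
    have h := ((hasDerivAt_id (0:ℝ)).smul_const (u - p)).const_add p
    simpa using h.hasDerivWithinAt
  have hd0 : HasFDerivWithinAt ω (Dω p) Z (p + (0:ℝ) • (u - p)) := by
    simpa using hωdiff p hp
  have hd1 : HasDerivWithinAt (fun s : ℝ => ω (p + s • (u - p))) (Dω p (u - p)) (Set.Icc 0 1) 0 :=
    hd0.comp_hasDerivWithinAt (0:ℝ) hline hmem
  have hd2 : HasDerivWithinAt (fun s : ℝ => ω (p + s • (u - p)) + s * A)
      (Dω p (u - p) + A) (Set.Icc 0 1) 0 := by
    have h := ((hasDerivAt_id (0:ℝ)).mul_const A).hasDerivWithinAt (s := Set.Icc 0 1)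
    have h3 := hd1.add h
    rw [one_mul] at h3
    exact h3
  have hcone : (1:ℝ) ∈ posTangentConeAt (Set.Icc (0:ℝ) 1) 0 := by
    apply mem_posTangentConeAt_of_segment_subset
    rw [zero_add, segment_eq_Icc zero_le_one]
  have hfin := hmin1.localize.hasFDerivWithinAt_nonneg hd2.hasFDerivWithinAt hcone
  simp at hfin
  rw [hA] at hfin
  rw [hV, hV, hV]
  simp only [map_sub] at hfin ⊢
  linarith

open Finset in
/-- gap-function bound for deterministic AMP on a bounded feasible set. -/
theorem amp_gap_bound_bounded
    {E : Type*} [NormedAddCommGroup E] [NormedSpace ℝ E] [FiniteDimensional ℝ E]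
    (Z : Set E) (hZne : Z.Nonempty) (hZcl : IsClosed Z) (hZcv : Convex ℝ Z)
    (μ : ℝ) (hμ : 0 < μ)
    (ω : E → ℝ) (Dω : E → E →L[ℝ] ℝ)
    (hωdiff : ∀ z ∈ Z, HasFDerivWithinAt ω (Dω z) Z z)
    (hωcont : ContinuousOn Dω Z)
    (hωsc : StrongConvexOn Z μ ω)
    (V : E → E → ℝ) (hV : ∀ z u, V z u = ω u - ω z - Dω z (u - z))
    (hVlb : ∀ z ∈ Z, ∀ u ∈ Z, μ / 2 * ‖u - z‖ ^ 2 ≤ V z u)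
    (J : E → ℝ) (hJ : ConvexOn ℝ Z J)
    (G : E → ℝ) (DG : E → E →L[ℝ] ℝ) (LG : ℝ) (hLG : 0 ≤ LG)
    (hGsmooth : ∀ v ∈ Z, ∀ x ∈ Z, G v ≤ G x + DG x (v - x) + LG / 2 * ‖v - x‖ ^ 2)
    (hGcvx : ∀ v ∈ Z, ∀ x ∈ Z, G x + DG x (v - x) ≤ G v)
    (H : E → E →L[ℝ] ℝ) (LH : ℝ) (hLH : 0 ≤ LH)
    (hHmono : ∀ v ∈ Z, ∀ x ∈ Z, 0 ≤ (H x - H v) (x - v))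
    (hHlip : ∀ v ∈ Z, ∀ x ∈ Z, ‖H x - H v‖ ≤ LH * ‖x - v‖)
    (Q : E → E → ℝ)
    (hQ : ∀ a b, Q a b = G a - G b + (H b) (a - b) + J a - J b)
    (α γ : ℕ → ℝ) (hαrange : ∀ t ≥ 1, 0 ≤ α t ∧ α t ≤ 1) (hγpos : ∀ t ≥ 1, 0 < γ t)
    (r w wag wmd : ℕ → E)
    (hr1Z : r 1 ∈ Z) (hw1 : w 1 = r 1) (hwag1 : wag 1 = r 1)
    (hwmd : ∀ t ≥ 1, wmd t = (1 - α t) • wag t + α t • r t)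
    (hwprox : ∀ t ≥ 1, w (t+1) ∈ Z ∧ IsMinOn
      (fun u => (γ t • (H (r t) + DG (wmd t))) (u - r t) + V (r t) u + γ t * J u) Z (w (t+1)))
    (hrprox : ∀ t ≥ 1, r (t+1) ∈ Z ∧ IsMinOn
      (fun u => (γ t • (H (w (t+1)) + DG (wmd t))) (u - r t) + V (r t) u + γ t * J u) Z (r (t+1)))
    (hwagrec : ∀ t ≥ 1, wag (t+1) = (1 - α t) • wag t + α t • w (t+1))
    (Γ : ℕ → ℝ) (hΓ1 : Γ 1 = 1) (hΓrec : ∀ t ≥ 2, Γ t = (1 - α t) * Γ (t-1))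
    (hα1 : α 1 = 1) (hαlt1 : ∀ t ≥ 2, α t < 1)
    (ΩZ : ℝ) (hΩ : ∀ z₁ ∈ Z, ∀ z₂ ∈ Z, V z₁ z₂ ≤ ΩZ ^ 2)
    (hstep : ∀ t ≥ 1, 0 ≤ μ - LG * α t * γ t - LH ^ 2 * γ t ^ 2 / μ)
    (hmono : ∀ t ≥ 1, α t / (Γ t * γ t) ≤ α (t+1) / (Γ (t+1) * γ (t+1)))
    (g : E → ℝ) (hg : ∀ a, g a = ⨆ u : Z, Q a ↑u) :
    ∀ t ≥ 1, g (wag (t+1)) ≤ α t / γ t * ΩZ ^ 2 := by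
  have step : ∀ t ≥ 1, wag t ∈ Z → r t ∈ Z → wag (t+1) ∈ Z ∧ ∀ u ∈ Z,
      Q (wag (t+1)) u ≤ (1 - α t) * Q (wag t) u + α t / γ t * (V (r t) u - V (r (t+1)) u) := by
    intro t ht hag hr
    obtain ⟨hα0, hα1'⟩ := hαrange t ht
    have hγ := hγpos t ht
    obtain ⟨hw, hwm⟩ := hwprox t ht
    obtain ⟨hr', hrm⟩ := hrprox t ht
    have hst := hstep t ht
    have hag' : wag (t+1) ∈ Z := by
      rw [hwagrec t ht]; exact hZcv hag hw (by linarith) hα0 (by ring)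
    have hmd : wmd t ∈ Z := by
      rw [hwmd t ht]; exact hZcv hag hr (by linarith) hα0 (by ring)
    refine ⟨hag', fun u hu => ?_⟩
    have p1 := amp_prox_aux Z hZcv ω Dω hωdiff V hV J hJ (γ t) hγ _ _ _ hw hwm _ hr'
    have p2 := amp_prox_aux Z hZcv ω Dω hωdiff V hV J hJ (γ t) hγ _ _ _ hr' hrm u hu
    have v1 := hVlb _ hr _ hw
    have v2 := hVlb _ hw _ hr'
    have hm := hHmono u hu _ hw
    have hG1 := hGsmooth _ hag' _ hmd
    have hG2 := hGcvx _ hag _ hmd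
    have hG3 := hGcvx _ hu _ hmd
    have hJ1 : J (wag (t+1)) ≤ (1 - α t) * J (wag t) + α t * J (w (t+1)) := by
      rw [hwagrec t ht]
      simpa using hJ.2 hag hw (sub_nonneg.2 hα1') hα0 (by ring)
    have hL : (H (w (t+1)) - H (r t)) (w (t+1) - r (t+1)) ≤
        LH * ‖w (t+1) - r t‖ * ‖r (t+1) - w (t+1)‖ := by
      calc _ ≤ ‖(H (w (t+1)) - H (r t)) (w (t+1) - r (t+1))‖ := Real.le_norm_self _
        _ ≤ ‖H (w (t+1)) - H (r t)‖ * ‖w (t+1) - r (t+1)‖ := ContinuousLinearMap.le_opNorm _ _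
        _ ≤ _ := by
          rw [norm_sub_rev (r (t+1))]
          exact mul_le_mul_of_nonneg_right (hHlip _ hr _ hw) (norm_nonneg _)
    set a := ‖w (t+1) - r t‖ with ha
    set b := ‖r (t+1) - w (t+1)‖ with hb
    have young : γ t * (LH * a * b) ≤ LH ^ 2 * γ t ^ 2 / μ / 2 * a ^ 2 + μ / 2 * b ^ 2 := by
      have h : 0 ≤ (γ t * LH * a - μ * b) ^ 2 / (2 * μ) := by positivity
      have e : (γ t * LH * a - μ * b) ^ 2 / (2 * μ) =
        LH ^ 2 * γ t ^ 2 / μ / 2 * a ^ 2 + μ / 2 * b ^ 2 - γ t * (LH * a * b) := by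
        field_simp; ring
      linarith
    have hL' := mul_le_mul_of_nonneg_left hL hγ.le
    have hst' := mul_nonneg hst (sq_nonneg a)
    have key : γ t * (DG (wmd t) (w (t+1) - u) + H u (w (t+1) - u) + J (w (t+1)) - J u
        + LG * α t / 2 * a ^ 2) ≤ V (r t) u - V (r (t+1)) u := by
      have hm' := mul_nonneg hγ.le hm
      simp only [map_sub, ContinuousLinearMap.sub_apply, ContinuousLinearMap.add_apply]
        at p1 p2 hm' hL' ⊢
      linarith
    have key2 : α t * (DG (wmd t) (w (t+1) - u) + H u (w (t+1) - u) + J (w (t+1)) - J u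
        + LG * α t / 2 * a ^ 2) ≤ α t / γ t * (V (r t) u - V (r (t+1)) u) := by
      have h := mul_le_mul_of_nonneg_left key (div_nonneg hα0 hγ.le)
      rw [← mul_assoc, div_mul_cancel₀ _ hγ.ne'] at h
      exact h
    have ediff : wag (t+1) - wmd t = α t • (w (t+1) - r t) := by
      rw [hwagrec t ht, hwmd t ht]; module
    have enorm : ‖wag (t+1) - wmd t‖ ^ 2 = α t ^ 2 * a ^ 2 := by
      rw [ediff, norm_smul, mul_pow, Real.norm_eq_abs, sq_abs]
    have elin : wag (t+1) - wmd t = (1 - α t) • (wag t - wmd t) + α t • (u - wmd t)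
        + α t • (w (t+1) - u) := by
      rw [hwagrec t ht]; module
    have elin2 : DG (wmd t) (wag (t+1) - wmd t) = (1 - α t) * DG (wmd t) (wag t - wmd t)
        + α t * DG (wmd t) (u - wmd t) + α t * DG (wmd t) (w (t+1) - u) := by
      rw [elin]; simp only [map_add, map_smul, smul_eq_mul]
    have eH : H u (wag (t+1) - u) = (1 - α t) * H u (wag t - u) + α t * H u (w (t+1) - u) := by
      have : wag (t+1) - u = (1 - α t) • (wag t - u) + α t • (w (t+1) - u) := by
        rw [hwagrec t ht]; module
      rw [this]; simp only [map_add, map_smul, smul_eq_mul]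
    rw [enorm, elin2] at hG1
    have hG2' := mul_le_mul_of_nonneg_left hG2 (sub_nonneg.2 hα1')
    have hG3' := mul_le_mul_of_nonneg_left hG3 hα0
    rw [hQ, hQ, eH]
    linarith
  have hΓpos : ∀ t ≥ 1, 0 < Γ t := by
    intro t ht
    induction t, ht using Nat.le_induction with
    | base => rw [hΓ1]; exact one_pos
    | succ n hn ih =>
      rw [hΓrec (n+1) (by omega)]
      exact mul_pos (sub_pos.2 (hαlt1 (n+1) (by omega))) (by simpa using ih)
  have hrZ : ∀ t ≥ 1, r t ∈ Z := by
    intro t ht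
    induction t, ht using Nat.le_induction with
    | base => exact hr1Z
    | succ n hn ih => exact (hrprox n hn).1
  have hagZ : ∀ t ≥ 1, wag t ∈ Z := by
    intro t ht
    induction t, ht using Nat.le_induction with
    | base => rw [hwag1]; exact hr1Z
    | succ n hn ih => exact (step n hn ih (hrZ n hn)).1
  have main : ∀ t ≥ 1, ∀ u ∈ Z,
      Q (wag (t+1)) u ≤ α t / γ t * (ΩZ ^ 2 - V (r (t+1)) u) := by
    intro t ht u hu
    induction t, ht using Nat.le_induction with
    | base =>
      have h := (step 1 le_rfl (hagZ 1 le_rfl) hr1Z).2 u hu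
      have h2 := hΩ _ hr1Z u hu
      have hg1 := hγpos 1 le_rfl
      refine h.trans ?_
      rw [hα1, sub_self, zero_mul, zero_add]
      exact mul_le_mul_of_nonneg_left (by linarith) (by positivity)
    | succ n hn ih =>
      have hn1 : n + 1 ≥ 1 := by omega
      have h := (step (n+1) hn1 (hagZ _ hn1) (hrZ _ hn1)).2 u hu
      have h2 := hΩ _ (hrZ _ hn1) u hu
      have hα2 := hαlt1 (n+1) (by omega)
      have hrec := hΓrec (n+1) (by omega)
      simp only [Nat.add_sub_cancel] at hrec
      have hm := mul_le_mul_of_nonneg_left (hmono n hn) (hΓpos (n+1) hn1).le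
      have e1 : Γ (n+1) * (α n / (Γ n * γ n)) = (1 - α (n+1)) * (α n / γ n) := by
        have := (hΓpos n hn).ne'
        have := (hγpos n hn).ne'
        rw [hrec]; field_simp
      have e2 : Γ (n+1) * (α (n+1) / (Γ (n+1) * γ (n+1))) = α (n+1) / γ (n+1) := by
        have := (hΓpos _ hn1).ne'
        have := (hγpos _ hn1).ne'
        field_simp
      rw [e1, e2] at hm
      have h3 := mul_le_mul_of_nonneg_left ih (sub_pos.2 hα2).le
      have h4 := mul_le_mul_of_nonneg_right hm (sub_nonneg.2 h2)
      linarith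
  intro t ht
  rw [hg]
  haveI : Nonempty Z := hZne.to_subtype
  refine ciSup_le fun u => (main t ht u u.2).trans ?_
  have hr' := hrZ (t+1) (by omega)
  have hv : 0 ≤ V (r (t+1)) u := le_trans (by positivity) (hVlb _ hr' _ u.2)
  exact mul_le_mul_of_nonneg_left (by linarith) (div_nonneg (hαrange t ht).1 (hγpos t ht).le)
end

section
/- Suppose sup_{z₁,z₂∈Z} V(z₁, z₂) ≤ Ω_Z² and L_H > 0, and set α_t = 2/(t+1) and γ_t = μt/(2(L_G + L_H t)) in the AMP method. Then for every t ≥ 1 and every u ∈ Z, Q(w_{t+1}^{ag}, u) ≤ (4L_G/(μ t(t+1)) + 4L_H/(μ t)) Ω_Z². -/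
theorem amp_prox_three {E : Type*} [NormedAddCommGroup E] [NormedSpace ℝ E]
    (Z : Set E) (hZcv : Convex ℝ Z)
    (ω : E → ℝ) (Dω : E → E →L[ℝ] ℝ)
    (hωdiff : ∀ z ∈ Z, HasFDerivWithinAt ω (Dω z) Z z)
    (V : E → E → ℝ) (hV : ∀ z u, V z u = ω u - ω z - Dω z (u - z))
    (J : E → ℝ) (hJ : ConvexOn ℝ Z J) (η : E →L[ℝ] ℝ) (g : ℝ) (hg : 0 < g) (r p : E)
    (hp : p ∈ Z) (hmin : IsMinOn (fun u => η (u - r) + V r u + g * J u) Z p)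
    (u : E) (hu : u ∈ Z) :
    η (p - u) + g * J p - g * J u ≤ V r u - V r p - V p u := by
  have hmem : ∀ s ∈ Set.Icc (0:ℝ) 1, p + s • (u - p) ∈ Z := fun s hs =>
    hZcv.add_smul_sub_mem hp hu hs
  have hline : HasDerivWithinAt (fun s : ℝ => p + s • (u - p)) (u - p) (Set.Icc 0 1) 0 := by
    have := ((hasDerivAt_id (0:ℝ)).smul_const (u - p)).const_add p
    simpa using this.hasDerivWithinAt
  have hd : HasDerivWithinAt (fun s : ℝ => ω (p + s • (u - p))) (Dω p (u - p)) (Set.Icc 0 1) 0 := by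
    have h0 : HasFDerivWithinAt ω (Dω p) Z (p + (0:ℝ) • (u - p)) := by
      simpa using hωdiff p hp
    exact h0.comp_hasDerivWithinAt (0:ℝ) hline hmem
  have hd' := hd.mono Set.Ioc_subset_Icc_self
  rw [hasDerivWithinAt_iff_tendsto_slope' (by simp)] at hd'
  have hne : (nhdsWithin (0:ℝ) (Set.Ioc 0 1)).NeBot := by
    rw [nhdsWithin_Ioc_eq_nhdsGT one_pos]; infer_instance
  have key : -(η (u - p) - Dω r (u - p) + g * (J u - J p)) ≤ Dω p (u - p) := by
    refine ge_of_tendsto hd' ?_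
    filter_upwards [self_mem_nhdsWithin] with s hs
    have h1 := hmin (hmem s ⟨hs.1.le, hs.2⟩)
    have h2 : J (p + s • (u - p)) ≤ (1 - s) * J p + s * J u := by
      have := hJ.2 hp hu (sub_nonneg.2 hs.2) hs.1.le (sub_add_cancel 1 s)
      have e : p + s • (u - p) = (1 - s) • p + s • u := by module
      rw [e]; simpa using this
    have h2' := mul_le_mul_of_nonneg_left h2 hg.le
    simp only [Set.mem_setOf_eq, hV] at h1
    have e : p + s • (u - p) - r = (p - r) + s • (u - p) := by module
    rw [e] at h1
    simp only [map_add, map_smul, smul_eq_mul] at h1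
    rw [slope_def_field, le_div_iff₀ (by linarith [hs.1])]
    simp only [zero_smul, add_zero, sub_zero]
    nlinarith
  simp only [hV]
  simp only [map_sub] at key ⊢
  nlinarith

set_option maxHeartbeats 1000000 in
open Finset in
/-- rate of convergence of deterministic AMP with the specific stepsizes. -/
theorem amp_rate_bounded_specific_steps
    {E : Type*} [NormedAddCommGroup E] [NormedSpace ℝ E] [FiniteDimensional ℝ E]
    (Z : Set E) (hZne : Z.Nonempty) (hZcl : IsClosed Z) (hZcv : Convex ℝ Z)
    (μ : ℝ) (hμ : 0 < μ)
    (ω : E → ℝ) (Dω : E → E →L[ℝ] ℝ)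
    (hωdiff : ∀ z ∈ Z, HasFDerivWithinAt ω (Dω z) Z z)
    (hωcont : ContinuousOn Dω Z)
    (hωsc : StrongConvexOn Z μ ω)
    (V : E → E → ℝ) (hV : ∀ z u, V z u = ω u - ω z - Dω z (u - z))
    (hVlb : ∀ z ∈ Z, ∀ u ∈ Z, μ / 2 * ‖u - z‖ ^ 2 ≤ V z u)
    (J : E → ℝ) (hJ : ConvexOn ℝ Z J)
    (G : E → ℝ) (DG : E → E →L[ℝ] ℝ) (LG : ℝ) (hLG : 0 ≤ LG)
    (hGsmooth : ∀ v ∈ Z, ∀ x ∈ Z, G v ≤ G x + DG x (v - x) + LG / 2 * ‖v - x‖ ^ 2)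
    (hGcvx : ∀ v ∈ Z, ∀ x ∈ Z, G x + DG x (v - x) ≤ G v)
    (H : E → E →L[ℝ] ℝ) (LH : ℝ) (hLH : 0 ≤ LH)
    (hHmono : ∀ v ∈ Z, ∀ x ∈ Z, 0 ≤ (H x - H v) (x - v))
    (hHlip : ∀ v ∈ Z, ∀ x ∈ Z, ‖H x - H v‖ ≤ LH * ‖x - v‖)
    (Q : E → E → ℝ)
    (hQ : ∀ a b, Q a b = G a - G b + (H b) (a - b) + J a - J b)
    (α γ : ℕ → ℝ) (hαrange : ∀ t ≥ 1, 0 ≤ α t ∧ α t ≤ 1) (hγpos : ∀ t ≥ 1, 0 < γ t)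
    (r w wag wmd : ℕ → E)
    (hr1Z : r 1 ∈ Z) (hw1 : w 1 = r 1) (hwag1 : wag 1 = r 1)
    (hwmd : ∀ t ≥ 1, wmd t = (1 - α t) • wag t + α t • r t)
    (hwprox : ∀ t ≥ 1, w (t+1) ∈ Z ∧ IsMinOn
      (fun u => (γ t • (H (r t) + DG (wmd t))) (u - r t) + V (r t) u + γ t * J u) Z (w (t+1)))
    (hrprox : ∀ t ≥ 1, r (t+1) ∈ Z ∧ IsMinOn
      (fun u => (γ t • (H (w (t+1)) + DG (wmd t))) (u - r t) + V (r t) u + γ t * J u) Z (r (t+1)))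
    (hwagrec : ∀ t ≥ 1, wag (t+1) = (1 - α t) • wag t + α t • w (t+1))
    (hLHpos : 0 < LH)
    (ΩZ : ℝ) (hΩ : ∀ z₁ ∈ Z, ∀ z₂ ∈ Z, V z₁ z₂ ≤ ΩZ ^ 2)
    (hαdef : ∀ t ≥ 1, α t = 2 / ((t : ℝ) + 1))
    (hγdef : ∀ t ≥ 1, γ t = μ * (t : ℝ) / (2 * (LG + LH * (t : ℝ)))) :
    ∀ t ≥ 1, ∀ u ∈ Z,
      Q (wag (t+1)) u ≤
        (4 * LG / (μ * (t : ℝ) * ((t : ℝ) + 1)) + 4 * LH / (μ * (t : ℝ))) * ΩZ ^ 2 := by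
  have ht0 : ∀ t : ℕ, t ≥ 1 → (1:ℝ) ≤ (t:ℝ) := fun t ht => by exact_mod_cast ht
  have hrZ : ∀ t ≥ 1, r t ∈ Z := by
    intro t ht
    obtain _ | _ | t := t
    · omega
    · exact hr1Z
    · exact (hrprox (t+1) (by omega)).1
  have hagZ : ∀ t ≥ 1, wag t ∈ Z := by
    intro t ht
    induction t, ht using Nat.le_induction with
    | base => rw [hwag1]; exact hr1Z
    | succ t ht ih =>
      rw [hwagrec t ht]
      exact hZcv ih (hwprox t ht).1 (by linarith [(hαrange t ht).2]) (hαrange t ht).1 (by ring)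
  have hmdZ : ∀ t ≥ 1, wmd t ∈ Z := by
    intro t ht
    rw [hwmd t ht]
    exact hZcv (hagZ t ht) (hrZ t ht) (by linarith [(hαrange t ht).2]) (hαrange t ht).1 (by ring)
  have hVnn : ∀ z ∈ Z, ∀ u ∈ Z, 0 ≤ V z u := fun z hz u hu =>
    le_trans (by positivity) (hVlb z hz u hu)
  -- one step
  have step : ∀ t ≥ 1, ∀ u ∈ Z, Q (wag (t+1)) u ≤ (1 - α t) * Q (wag t) u
      + α t / γ t * (V (r t) u - V (r (t+1)) u) := by
    intro t ht u hu
    have hg := hγpos t ht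
    obtain ⟨ha0, ha1⟩ := hαrange t ht
    obtain ⟨hwZ, hwmin⟩ := hwprox t ht
    obtain ⟨hrZ', hrmin⟩ := hrprox t ht
    have p1 := amp_prox_three Z hZcv ω Dω hωdiff V hV J hJ _ (γ t) hg _ _ hwZ hwmin _ hrZ'
    have p2 := amp_prox_three Z hZcv ω Dω hωdiff V hV J hJ _ (γ t) hg _ _ hrZ' hrmin u hu
    have v1 := hVlb _ (hrZ t ht) _ hwZ
    have v2 := hVlb _ hwZ _ hrZ'
    have lip : (H (w (t+1)) - H (r t)) (w (t+1) - r (t+1)) ≤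
        LH * ‖w (t+1) - r t‖ * ‖r (t+1) - w (t+1)‖ := by
      refine le_trans (le_abs_self _) ?_
      rw [← Real.norm_eq_abs, norm_sub_rev (r (t+1))]
      refine le_trans (ContinuousLinearMap.le_opNorm _ _) ?_
      exact mul_le_mul_of_nonneg_right (hHlip _ (hrZ t ht) _ hwZ) (norm_nonneg _)
    have mono := hHmono u hu _ hwZ
    have g1 := hGsmooth _ (hagZ (t+1) (by omega)) _ (hmdZ t ht)
    have g2 := hGcvx _ (hagZ t ht) _ (hmdZ t ht)
    have g3 := hGcvx _ hu _ (hmdZ t ht)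
    have ed : wag (t+1) - wmd t = α t • (w (t+1) - r t) := by
      rw [hwagrec t ht, hwmd t ht]; module
    have ed2 : wag (t+1) - wmd t = (1 - α t) • (wag t - wmd t) + α t • ((u - wmd t) + (w (t+1) - u)) := by
      rw [hwagrec t ht]; module
    have en : ‖wag (t+1) - wmd t‖ = α t * ‖w (t+1) - r t‖ := by
      rw [ed, norm_smul, Real.norm_of_nonneg ha0]
    rw [en, ed2] at g1
    simp only [map_add, map_smul, smul_eq_mul] at g1
    have j1 : J (wag (t+1)) ≤ (1 - α t) * J (wag t) + α t * J (w (t+1)) := by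
      have := hJ.2 (hagZ t ht) hwZ (sub_nonneg.2 ha1) ha0 (sub_add_cancel 1 (α t))
      rw [hwagrec t ht]; simpa using this
    have h1 : H u (wag (t+1) - u) = (1 - α t) * H u (wag t - u) + α t * H u (w (t+1) - u) := by
      have : wag (t+1) - u = (1 - α t) • (wag t - u) + α t • (w (t+1) - u) := by
        rw [hwagrec t ht]; module
      rw [this]; simp
    generalize ‖w (t+1) - r t‖ = x at *
    generalize ‖r (t+1) - w (t+1)‖ = y at *
    -- combined prox inequality
    have comb : γ t * (DG (wmd t) (w (t+1) - u) + H (w (t+1)) (w (t+1) - u) + J (w (t+1)) - J u)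
        ≤ V (r t) u - V (r (t+1)) u - μ / 2 * x ^ 2 - μ / 2 * y ^ 2 + γ t * (LH * x * y) := by
      have lip' := mul_le_mul_of_nonneg_left lip hg.le
      simp only [map_sub, map_add, ContinuousLinearMap.smul_apply, ContinuousLinearMap.add_apply,
        ContinuousLinearMap.sub_apply, smul_eq_mul] at p1 p2 lip' ⊢
      linarith
    have hT := ht0 t ht
    have hD : 0 < LG + LH * t := by positivity
    have gl : γ t * LH ≤ μ / 2 := by
      rw [hγdef t ht, div_mul_eq_mul_div, div_le_iff₀ (by positivity)]
      nlinarith [mul_nonneg hμ.le hLG]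
    have gL : γ t * LH + LG * α t * γ t / 2 ≤ μ / 2 := by
      have : α t ≤ 2 / t * 1 := by
        rw [hαdef t ht, mul_one]
        exact div_le_div_of_nonneg_left (by norm_num) (by linarith) (by linarith)
      have e : γ t * LH + LG * (2 / t * 1) * γ t / 2 = μ / 2 := by
        rw [hγdef t ht]; field_simp; ring
      have := mul_le_mul_of_nonneg_left this (mul_nonneg hLG hg.le)
      nlinarith
    have amgm : γ t * (LH * x * y) ≤ γ t * LH / 2 * x ^ 2 + γ t * LH / 2 * y ^ 2 := by
      nlinarith [mul_nonneg (mul_nonneg hg.le hLH) (sq_nonneg (x - y))]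
    have hgl0 : 0 ≤ γ t * LH := by positivity
    have comb2 : γ t * (DG (wmd t) (w (t+1) - u) + H (w (t+1)) (w (t+1) - u) + J (w (t+1)) - J u)
        + γ t * (LG * α t / 2 * x ^ 2) ≤ V (r t) u - V (r (t+1)) u := by
      have k1 := mul_le_mul_of_nonneg_right gL (sq_nonneg x)
      have k2 := mul_le_mul_of_nonneg_right gl (sq_nonneg y)
      have k3 := mul_nonneg hgl0 (sq_nonneg x)
      have k4 := mul_nonneg hgl0 (sq_nonneg y)
      linarith
    rw [← mul_add, ← le_div_iff₀' hg] at comb2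
    have comb3 := mul_le_mul_of_nonneg_left comb2 ha0
    have g2' := mul_le_mul_of_nonneg_left g2 (sub_nonneg.2 ha1)
    have g3' := mul_le_mul_of_nonneg_left g3 ha0
    rw [ContinuousLinearMap.sub_apply] at mono
    have mono' := mul_nonneg ha0 mono
    rw [div_mul_eq_mul_div, ← mul_div_assoc', hQ, hQ, h1]
    linarith
  -- induction
  have main : ∀ t : ℕ, t ≥ 1 → ∀ u ∈ Z, (t:ℝ) * (t+1) / 2 * Q (wag (t+1)) u
      + 2 * (LG + LH * t) / μ * V (r (t+1)) u ≤ 2 * (LG + LH * t) / μ * ΩZ ^ 2 := by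
    intro t ht u hu
    have step2 : ∀ t : ℕ, t ≥ 1 → (t:ℝ) * (t+1) / 2 * Q (wag (t+1)) u
        + 2 * (LG + LH * t) / μ * V (r (t+1)) u ≤ ((t:ℝ) - 1) * t / 2 * Q (wag t) u
        + 2 * (LG + LH * t) / μ * V (r t) u := by
      intro t ht
      have hT := ht0 t ht
      have hD : 0 < LG + LH * t := by positivity
      have hs := mul_le_mul_of_nonneg_left (step t ht u hu)
        (show (0:ℝ) ≤ (t:ℝ) * (t+1) / 2 by positivity)
      have e1 : (t:ℝ) * (t+1) / 2 * (1 - α t) = ((t:ℝ) - 1) * t / 2 := by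
        rw [hαdef t ht]; field_simp; ring
      have e2 : (t:ℝ) * (t+1) / 2 * (α t / γ t) = 2 * (LG + LH * t) / μ := by
        rw [hαdef t ht, hγdef t ht]; field_simp
      rw [mul_add ((t:ℝ) * (t+1) / 2), ← mul_assoc ((t:ℝ) * (t+1) / 2) (1 - α t), ← mul_assoc ((t:ℝ) * (t+1) / 2) (α t / γ t), e1, e2] at hs
      linarith
    induction t, ht using Nat.le_induction with
    | base =>
      have h := step2 1 le_rfl
      have h2 := mul_le_mul_of_nonneg_left (hΩ _ hr1Z u hu)
        (show 0 ≤ 2 * (LG + LH * ((1:ℕ):ℝ)) / μ by positivity)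
      norm_num at h h2 ⊢
      linarith
    | succ t ht ih =>
      have h := step2 (t+1) (by omega)
      have h2 := mul_le_mul_of_nonneg_left (hΩ _ (hrZ (t+1) (by omega)) u hu)
        (show 0 ≤ 2 * LH / μ by positivity)
      have e : 2 * (LG + LH * ((t+1:ℕ):ℝ)) / μ = 2 * (LG + LH * t) / μ + 2 * LH / μ := by
        push_cast; ring
      rw [e] at h ⊢
      push_cast at h ⊢
      rw [show ((t:ℝ) + 1 - 1) * (t+1) / 2 = (t:ℝ) * (t+1) / 2 by ring] at h
      linarith
  intro t ht u hu
  have hT := ht0 t ht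
  have hm := main t ht u hu
  have hv := hVnn _ (hrZ (t+1) (by omega)) u hu
  have hc : 0 ≤ 2 * (LG + LH * (t:ℝ)) / μ := by positivity
  have hm2 : (t:ℝ) * (t+1) / 2 * Q (wag (t+1)) u ≤ 2 * (LG + LH * t) / μ * ΩZ ^ 2 := by
    linarith [mul_nonneg hc hv]
  have hpos : (0:ℝ) < (t:ℝ) * (t+1) / 2 := by positivity
  rw [← le_div_iff₀' hpos] at hm2
  refine hm2.trans ?_
  have e : 2 * (LG + LH * (t:ℝ)) / μ * ΩZ ^ 2 / ((t:ℝ) * (t+1) / 2)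
      = (4 * LG / (μ * t * (t+1)) + 4 * LH / (μ * (t+1))) * ΩZ ^ 2 := by
    field_simp; ring
  rw [e]
  refine mul_le_mul_of_nonneg_right (add_le_add le_rfl ?_) (sq_nonneg _)
  exact div_le_div_of_nonneg_left (by positivity) (by positivity)
    (mul_le_mul_of_nonneg_left (by linarith) hμ.le)
end

section
/- Suppose L_H > 0, a strong solution u* of VI(Z;G,H,J) exists, D := ‖r_1 − u*‖, an integer N ≥ 2 is given, and the AMP parameters are α_t = 2/(t+1) and γ_t = t/(3(L_G + L_H N)). Then there exists v_N ∈ E with g̃(w_N^{ag}, v_N) ≤ ε_N, where ‖v_N‖ ≤ [12L_G/(N(N−1)) + 12L_H/(N−1)] D and ε_N ≤ [45L_G/(N(N−1)) + 45L_H/(N−1)] D². -/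
open scoped RealInnerProductSpace in
lemma amp_prox {E : Type*} [NormedAddCommGroup E] [InnerProductSpace ℝ E]
    (Z : Set E) (hZcv : Convex ℝ Z) (J : E → ℝ) (hJ : ConvexOn ℝ Z J)
    (η r w : E) (γ : ℝ) (hγ : 0 < γ) (hw : w ∈ Z)
    (hmin : ∀ u ∈ Z, ⟪η, w - r⟫ + ‖w - r‖ ^ 2 / 2 + γ * J w
      ≤ ⟪η, u - r⟫ + ‖u - r‖ ^ 2 / 2 + γ * J u) (u : E) (hu : u ∈ Z) :
    ⟪η, w - r⟫ + ‖w - r‖ ^ 2 / 2 + γ * J w + ‖u - w‖ ^ 2 / 2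
      ≤ ⟪η, u - r⟫ + ‖u - r‖ ^ 2 / 2 + γ * J u := by
  have key : ∀ s : ℝ, 0 < s → s < 1 →
      ⟪η, w - r⟫ + ‖w - r‖ ^ 2 / 2 + γ * J w + (1 - s) * (‖u - w‖ ^ 2 / 2)
      ≤ ⟪η, u - r⟫ + ‖u - r‖ ^ 2 / 2 + γ * J u := by
    intro s hs hs1
    have hx := hmin ((1 - s) • w + s • u) (hZcv hw hu (by linarith) hs.le (by ring))
    have hJx := hJ.2 hw hu (show (0:ℝ) ≤ 1 - s by linarith) hs.le (by ring)
    simp only [smul_eq_mul] at hJx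
    have hJx' := mul_le_mul_of_nonneg_left hJx hγ.le
    have e1 : (1 - s) • w + s • u - r = (1 - s) • (w - r) + s • (u - r) := by
      module
    have e2 : u - w = (u - r) - (w - r) := by abel
    rw [e1] at hx
    rw [e2]
    generalize w - r = a at *
    generalize u - r = b at *
    rw [@norm_sub_sq_real]
    rw [@norm_add_sq_real, norm_smul, norm_smul, inner_add_right, inner_smul_right, inner_smul_right,
      inner_smul_left, inner_smul_right, mul_pow, mul_pow, Real.norm_eq_abs, Real.norm_eq_abs,
      sq_abs, sq_abs, real_inner_comm b a] at hx
    simp only [conj_trivial] at hx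
    have : s * (⟪η, a⟫ + ‖a‖ ^ 2 / 2 + γ * J w + (1 - s) * ((‖b‖ ^ 2 - 2 * ⟪b, a⟫ + ‖a‖ ^ 2) / 2)) ≤
        s * (⟪η, b⟫ + ‖b‖ ^ 2 / 2 + γ * J u) := by
      have hc := real_inner_comm b a
      nlinarith
    exact le_of_mul_le_mul_left this hs
  by_contra hcon
  push Not at hcon
  set A := ⟪η, w - r⟫ + ‖w - r‖ ^ 2 / 2 + γ * J w
  set B := ⟪η, u - r⟫ + ‖u - r‖ ^ 2 / 2 + γ * J u
  set n := ‖u - w‖ ^ 2 / 2 with hn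
  have hn0 : 0 ≤ n := by positivity
  have hd : 0 < A + n - B := by linarith
  have h2 := key ((A + n - B) / (2 * (A + n - B) + 2 * n)) (by positivity)
    (by rw [div_lt_one (by positivity)]; linarith)
  have h3 : (A + n - B) / (2 * (A + n - B) + 2 * n) * n < A + n - B := by
    rw [div_mul_eq_mul_div, div_lt_iff₀ (by positivity)]
    nlinarith
  nlinarith

open scoped RealInnerProductSpace in
lemma amp_step {E : Type*} [NormedAddCommGroup E] [InnerProductSpace ℝ E]
    (Z : Set E) (hZcv : Convex ℝ Z) (J : E → ℝ) (hJ : ConvexOn ℝ Z J)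
    (G : E → ℝ) (DG : E → E) (LG : ℝ)
    (hGsmooth : ∀ v ∈ Z, ∀ x ∈ Z, G v ≤ G x + ⟪DG x, v - x⟫ + LG / 2 * ‖v - x‖ ^ 2)
    (hGcvx : ∀ v ∈ Z, ∀ x ∈ Z, G x + ⟪DG x, v - x⟫ ≤ G v)
    (H : E → E) (LH : ℝ)
    (hHmono : ∀ v ∈ Z, ∀ x ∈ Z, 0 ≤ ⟪H x - H v, x - v⟫)
    (hHlip : ∀ v ∈ Z, ∀ x ∈ Z, ‖H x - H v‖ ≤ LH * ‖x - v‖)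
    (α γ : ℝ) (hα0 : 0 ≤ α) (hα1 : α ≤ 1) (hγ : 0 < γ)
    (r w r' ag : E) (hr : r ∈ Z) (hw : w ∈ Z) (hr' : r' ∈ Z) (hag : ag ∈ Z)
    (hwm : ∀ u ∈ Z, ⟪γ • (H r + DG ((1 - α) • ag + α • r)), w - r⟫ + ‖w - r‖ ^ 2 / 2 + γ * J w
      ≤ ⟪γ • (H r + DG ((1 - α) • ag + α • r)), u - r⟫ + ‖u - r‖ ^ 2 / 2 + γ * J u)
    (hrm : ∀ u ∈ Z, ⟪γ • (H w + DG ((1 - α) • ag + α • r)), r' - r⟫ + ‖r' - r‖ ^ 2 / 2 + γ * J r'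
      ≤ ⟪γ • (H w + DG ((1 - α) • ag + α • r)), u - r⟫ + ‖u - r‖ ^ 2 / 2 + γ * J u)
    (u : E) (hu : u ∈ Z) :
    γ * (G ((1 - α) • ag + α • w) - G u + ⟪H u, (1 - α) • ag + α • w - u⟫
      + J ((1 - α) • ag + α • w) - J u) ≤
    γ * ((1 - α) * (G ag - G u + ⟪H u, ag - u⟫ + J ag - J u)) +
      α * (‖r - u‖ ^ 2 / 2 - ‖r' - u‖ ^ 2 / 2
        - (1 - γ ^ 2 * LH ^ 2 - LG * α * γ) / 2 * ‖r - w‖ ^ 2) := by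
  have hmd : (1 - α) • ag + α • r ∈ Z := hZcv hag hr (by linarith) hα0 (by ring)
  have hag' : (1 - α) • ag + α • w ∈ Z := hZcv hag hw (by linarith) hα0 (by ring)
  have p1 := amp_prox Z hZcv J hJ _ r w γ hγ hw hwm r' hr'
  have p2 := amp_prox Z hZcv J hJ _ r r' γ hγ hr' hrm u hu
  have g1 := hGsmooth _ hag' _ hmd
  have g2 := hGcvx ag hag _ hmd
  have g3 := hGcvx u hu _ hmd
  have hJx := hJ.2 hag hw (show (0:ℝ) ≤ 1 - α by linarith) hα0 (by ring)
  simp only [smul_eq_mul] at hJx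
  have hm := hHmono u hu w hw
  have hl := hHlip w hw r hr
  have cs := abs_real_inner_le_norm (H r - H w) (w - r')
  have cs' := (abs_le.1 cs).1
  have e1 : (1 - α) • ag + α • w - ((1 - α) • ag + α • r) = α • (w - r) := by module
  have e3 : ⟪DG ((1 - α) • ag + α • r), α • (w - r)⟫ =
     (1 - α) * ⟪DG ((1 - α) • ag + α • r), ag - ((1 - α) • ag + α • r)⟫
     + α * ⟪DG ((1 - α) • ag + α • r), u - ((1 - α) • ag + α • r)⟫
     + α * ⟪DG ((1 - α) • ag + α • r), w - u⟫ := by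
    rw [← inner_smul_right, ← inner_smul_right, ← inner_smul_right, ← inner_add_right,
      ← inner_add_right]
    congr 1
    module
  have e4 : ⟪H u, (1 - α) • ag + α • w - u⟫ = (1 - α) * ⟪H u, ag - u⟫ + α * ⟪H u, w - u⟫ := by
    rw [← inner_smul_right, ← inner_smul_right, ← inner_add_right]
    congr 1
    module
  rw [e1, e3, norm_smul, mul_pow, Real.norm_eq_abs, sq_abs] at g1
  rw [e4]
  generalize (1 - α) • ag + α • r = md at *
  generalize (1 - α) • ag + α • w = ag' at *
  rw [norm_sub_rev r w, norm_sub_rev r u, norm_sub_rev r' u]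
  rw [norm_sub_rev r w] at hl
  rw [norm_sub_rev r' w] at p1
  have young : γ * (‖H r - H w‖ * ‖w - r'‖) ≤ γ ^ 2 * LH ^ 2 / 2 * ‖w - r‖ ^ 2 + ‖w - r'‖ ^ 2 / 2 := by
    have h1 : γ * (‖H r - H w‖ * ‖w - r'‖) ≤ γ * ((LH * ‖w - r‖) * ‖w - r'‖) := by gcongr
    nlinarith [sq_nonneg (γ * LH * ‖w - r‖ - ‖w - r'‖)]
  have cs2 := mul_le_mul_of_nonneg_left cs' hγ.le
  have e5 : γ * ⟪DG md, w - u⟫ + γ * ⟪H w, w - u⟫ =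
      ⟪γ • (H r + DG md), w - r⟫ - ⟪γ • (H r + DG md), r' - r⟫ + ⟪γ • (H w + DG md), r' - r⟫
       - ⟪γ • (H w + DG md), u - r⟫ - γ * ⟪H r - H w, w - r'⟫ := by
    simp only [real_inner_smul_left, inner_add_left, inner_sub_left, inner_sub_right]
    ring
  rw [inner_sub_left] at hm
  have A : γ * ⟪DG md, w - u⟫ + γ * ⟪H u, w - u⟫ + γ * (J w - J u) ≤
     ‖u - r‖ ^ 2 / 2 - ‖u - r'‖ ^ 2 / 2 - (1 - γ ^ 2 * LH ^ 2) / 2 * ‖w - r‖ ^ 2 := by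
    have := mul_le_mul_of_nonneg_left hm hγ.le
    nlinarith
  have A' := mul_le_mul_of_nonneg_left A hα0
  have B : G ag' ≤ (1 - α) * G ag + α * G u + α * ⟪DG md, w - u⟫ + LG / 2 * (α ^ 2 * ‖w - r‖ ^ 2) := by
    have h1 := mul_le_mul_of_nonneg_left g2 (show (0:ℝ) ≤ 1 - α by linarith)
    have h2 := mul_le_mul_of_nonneg_left g3 hα0
    linarith
  have C := mul_le_mul_of_nonneg_left (add_le_add B hJx) hγ.le
  linarith


open Finset in
open scoped RealInnerProductSpace in
/-- deterministic AMP on an unbounded feasible set, specific stepsizes. -/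
theorem amp_unbounded_specific_steps
    {E : Type*} [NormedAddCommGroup E] [InnerProductSpace ℝ E] [FiniteDimensional ℝ E]
    (Z : Set E) (hZne : Z.Nonempty) (hZcl : IsClosed Z) (hZcv : Convex ℝ Z)
    (V : E → E → ℝ) (hV : ∀ z u, V z u = ‖u - z‖ ^ 2 / 2)
    (J : E → ℝ) (hJ : ConvexOn ℝ Z J)
    (G : E → ℝ) (DG : E → E) (LG : ℝ) (hLG : 0 ≤ LG)
    (hGsmooth : ∀ v ∈ Z, ∀ x ∈ Z, G v ≤ G x + ⟪DG x, v - x⟫ + LG / 2 * ‖v - x‖ ^ 2)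
    (hGcvx : ∀ v ∈ Z, ∀ x ∈ Z, G x + ⟪DG x, v - x⟫ ≤ G v)
    (H : E → E) (LH : ℝ) (hLH : 0 ≤ LH)
    (hHmono : ∀ v ∈ Z, ∀ x ∈ Z, 0 ≤ ⟪H x - H v, x - v⟫)
    (hHlip : ∀ v ∈ Z, ∀ x ∈ Z, ‖H x - H v‖ ≤ LH * ‖x - v‖)
    (Q : E → E → ℝ)
    (hQ : ∀ a b, Q a b = G a - G b + ⟪H b, a - b⟫ + J a - J b)
    (α γ : ℕ → ℝ) (hαrange : ∀ t ≥ 1, 0 ≤ α t ∧ α t ≤ 1) (hγpos : ∀ t ≥ 1, 0 < γ t)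
    (r w wag wmd : ℕ → E)
    (hr1Z : r 1 ∈ Z) (hw1 : w 1 = r 1) (hwag1 : wag 1 = r 1)
    (hwmd : ∀ t ≥ 1, wmd t = (1 - α t) • wag t + α t • r t)
    (hwprox : ∀ t ≥ 1, w (t+1) ∈ Z ∧ IsMinOn
      (fun u => ⟪γ t • (H (r t) + DG (wmd t)), u - r t⟫ + V (r t) u + γ t * J u) Z (w (t+1)))
    (hrprox : ∀ t ≥ 1, r (t+1) ∈ Z ∧ IsMinOn
      (fun u => ⟪γ t • (H (w (t+1)) + DG (wmd t)), u - r t⟫ + V (r t) u + γ t * J u) Z (r (t+1)))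
    (hwagrec : ∀ t ≥ 1, wag (t+1) = (1 - α t) • wag t + α t • w (t+1))
    (ustar : E) (hustarZ : ustar ∈ Z) (J' : E)
    (hJ'sub : ∀ u ∈ Z, J ustar + ⟪J', u - ustar⟫ ≤ J u)
    (hstrong : ∀ u ∈ Z, ⟪DG ustar + H ustar + J', ustar - u⟫ ≤ 0)
    (D : ℝ) (hD : D = ‖r 1 - ustar‖)
    (hLHpos : 0 < LH)
    (N : ℕ) (hN : 2 ≤ N)
    (hαdef : ∀ t ≥ 1, α t = 2 / ((t : ℝ) + 1))
    (hγdef : ∀ t ≥ 1, γ t = (t : ℝ) / (3 * (LG + LH * (N : ℝ))))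
    (gt : E → E → ℝ)
    (hgt : ∀ a v, gt a v = ⨆ u : Z, (Q a ↑u - ⟪v, a - ↑u⟫)) :
    ∃ (v : E) (ε : ℝ), 0 ≤ ε ∧ gt (wag N) v ≤ ε ∧
      ‖v‖ ≤ (12 * LG / ((N : ℝ) * ((N : ℝ) - 1)) + 12 * LH / ((N : ℝ) - 1)) * D ∧
      ε ≤ (45 * LG / ((N : ℝ) * ((N : ℝ) - 1)) + 45 * LH / ((N : ℝ) - 1)) * D ^ 2 := by
  have hN' : (2:ℝ) ≤ N := by exact_mod_cast hN
  set M := LG + LH * (N : ℝ) with hM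
  have hMpos : 0 < M := by positivity
  have hrZ : ∀ t ≥ 1, r t ∈ Z := by
    intro t ht
    rcases Nat.exists_eq_add_of_le' ht with ⟨k, rfl⟩
    rcases Nat.eq_zero_or_pos k with rfl | hk
    · exact hr1Z
    · exact (hrprox k hk).1
  have hagZ : ∀ t ≥ 1, wag t ∈ Z := by
    intro t ht
    induction t, ht using Nat.le_induction with
    | base => rw [hwag1]; exact hr1Z
    | succ t ht ih =>
      rw [hwagrec t ht]
      exact hZcv ih (hwprox t ht).1 (by linarith [(hαrange t ht).2]) (hαrange t ht).1 (by ring)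
  have step : ∀ t ≥ 1, t ≤ N → ∀ u ∈ Z,
      ((t:ℝ) + 1) * t / 2 * Q (wag (t+1)) u + 3 * M / 2 * ‖r (t+1) - u‖ ^ 2
        + M / 2 * ‖r t - w (t+1)‖ ^ 2
        ≤ (t:ℝ) * (t - 1) / 2 * Q (wag t) u + 3 * M / 2 * ‖r t - u‖ ^ 2 := by
    intro t ht htN u hu
    have ht' : (1:ℝ) ≤ t := by exact_mod_cast ht
    have htN' : (t:ℝ) ≤ N := by exact_mod_cast htN
    have h := amp_step Z hZcv J hJ G DG LG hGsmooth hGcvx H LH hHmono hHlip (α t) (γ t)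
      (hαrange t ht).1 (hαrange t ht).2 (hγpos t ht) (r t) (w (t+1)) (r (t+1)) (wag t)
      (hrZ t ht) (hwprox t ht).1 (hrprox t ht).1 (hagZ t ht)
      (fun u hu => by
        have := (hwprox t ht).2 hu
        simp only [Set.mem_ofPred_eq, hV, hwmd t ht] at this
        exact this)
      (fun u hu => by
        have := (hrprox t ht).2 hu
        simp only [Set.mem_ofPred_eq, hV, hwmd t ht] at this
        exact this) u hu
    rw [← hwagrec t ht, ← hQ, ← hQ] at h
    have hc : 1 / 3 ≤ 1 - γ t ^ 2 * LH ^ 2 - LG * α t * γ t := by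
      have b1 : γ t * LH ≤ LH * N / (3 * M) := by
        rw [hγdef t ht, div_mul_eq_mul_div]
        refine div_le_div_of_nonneg_right ?_ (by positivity)
        nlinarith
      have b0 : 0 ≤ γ t * LH := mul_nonneg (hγpos t ht).le hLH
      have b2 : LG * α t * γ t ≤ 2 / 3 * (LG / M) := by
        rw [hγdef t ht, hαdef t ht]
        have : LG * (2 / ((t:ℝ) + 1)) * (t / (3 * M)) = 2 / 3 * (LG / M) * (t / (t + 1)) := by
          field_simp
        rw [this]
        apply mul_le_of_le_one_right (by positivity)
        rw [div_le_one (by positivity)]; linarith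
      have b3 : LH * N / (3 * M) = 1 / 3 * (LH * N / M) := by field_simp
      have b4 : LG / M + LH * N / M = 1 := by
        rw [← add_div, ← hM]; exact div_self hMpos.ne'
      have b5 : 0 ≤ LH * N / M := by positivity
      have b6 : 0 ≤ LG / M := by positivity
      nlinarith [pow_le_pow_left₀ b0 b1 2]
    have h2 : γ t * Q (wag (t+1)) u ≤ γ t * ((1 - α t) * Q (wag t) u) +
        α t * (‖r t - u‖ ^ 2 / 2 - ‖r (t+1) - u‖ ^ 2 / 2 - 1 / 6 * ‖r t - w (t+1)‖ ^ 2) := by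
      refine h.trans ?_
      have := (hαrange t ht).1
      have h5 := mul_le_mul_of_nonneg_right hc (sq_nonneg ‖r t - w (t+1)‖)
      have h6 : ∀ X Y : ℝ, X ≤ Y → α t * X ≤ α t * Y := fun X Y h => mul_le_mul_of_nonneg_left h this
      have := h6 (‖r t - u‖ ^ 2 / 2 - ‖r (t+1) - u‖ ^ 2 / 2 - (1 - γ t ^ 2 * LH ^ 2 - LG * α t * γ t) / 2 * ‖r t - w (t+1)‖ ^ 2) _ (show _ ≤ ‖r t - u‖ ^ 2 / 2 - ‖r (t+1) - u‖ ^ 2 / 2 - 1 / 6 * ‖r t - w (t+1)‖ ^ 2 by linarith)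
      linarith
    have h3 := mul_le_mul_of_nonneg_left h2 (show 0 ≤ 3 * M * ((t:ℝ) + 1) / 2 by positivity)
    rw [hγdef t ht, hαdef t ht] at h3
    have i1 : 3 * M * ((t:ℝ) + 1) / 2 * (t / (3 * M) * Q (wag (t+1)) u) =
        ((t:ℝ) + 1) * t / 2 * Q (wag (t+1)) u := by field_simp
    have i2 : ∀ X : ℝ, 3 * M * ((t:ℝ) + 1) / 2 * (t / (3 * M) * ((1 - 2 / ((t:ℝ) + 1)) * Q (wag t) u) +
        2 / ((t:ℝ) + 1) * X) = (t:ℝ) * (t - 1) / 2 * Q (wag t) u + 3 * M * X := by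
      intro X; field_simp; ring
    rw [i1, i2] at h3
    linarith
  have inv : ∀ t ≥ 1, t ≤ N → ∀ u ∈ Z,
      (t:ℝ) * (t - 1) / 2 * Q (wag t) u + 3 * M / 2 * ‖r t - u‖ ^ 2 ≤
        3 * M / 2 * ‖r 1 - u‖ ^ 2 := by
    intro t ht
    induction t, ht using Nat.le_induction with
    | base => intro _ u hu; norm_num
    | succ t ht ih =>
      intro htN u hu
      have h1 := ih (by omega) u hu
      have h2 := step t ht (by omega) u hu
      have : 0 ≤ M / 2 * ‖r t - w (t+1)‖ ^ 2 := by positivity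
      push_cast
      rw [add_sub_cancel_right]
      linarith
  have hQpos : ∀ a ∈ Z, 0 ≤ Q a ustar := by
    intro a ha
    have h1 := hGcvx a ha ustar hustarZ
    have h2 := hJ'sub a ha
    have h3 := hstrong a ha
    rw [← neg_sub a ustar, inner_neg_right, inner_add_left, inner_add_left] at h3
    rw [hQ]; linarith
  have hD0 : 0 ≤ D := hD ▸ norm_nonneg _
  have hrD : ∀ t ≥ 1, t ≤ N → ‖r t - ustar‖ ≤ D := by
    intro t ht htN
    have h1 := inv t ht htN ustar hustarZ
    have ht' : (1:ℝ) ≤ t := by exact_mod_cast ht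
    have h2 : 0 ≤ (t:ℝ) * (t - 1) / 2 * Q (wag t) ustar :=
      mul_nonneg (div_nonneg (mul_nonneg (by linarith) (by linarith)) (by norm_num))
        (hQpos _ (hagZ t ht))
    rw [← hD] at h1
    have h3 : ‖r t - ustar‖ ^ 2 ≤ D ^ 2 := by
      have : 3 * M / 2 * ‖r t - ustar‖ ^ 2 ≤ 3 * M / 2 * D ^ 2 := by linarith
      exact le_of_mul_le_mul_left this (by positivity)
    exact le_of_sq_le_sq h3 hD0
  have hwD : ∀ t ≥ 1, t ≤ N → ‖r t - w (t+1)‖ ≤ 7 / 4 * D := by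
    intro t ht htN
    have h1 := inv t ht htN ustar hustarZ
    have h0 := step t ht htN ustar hustarZ
    have h2 : 0 ≤ ((t:ℝ) + 1) * t / 2 * Q (wag (t+1)) ustar :=
      mul_nonneg (by positivity) (hQpos _ (hagZ (t+1) (by omega)))
    have h4 : 0 ≤ 3 * M / 2 * ‖r (t+1) - ustar‖ ^ 2 := by positivity
    rw [← hD] at h1
    have h3 : ‖r t - w (t+1)‖ ^ 2 ≤ 3 * D ^ 2 := by
      have : M / 2 * ‖r t - w (t+1)‖ ^ 2 ≤ M / 2 * (3 * D ^ 2) := by linarith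
      exact le_of_mul_le_mul_left this (by positivity)
    exact le_of_sq_le_sq (by nlinarith) (by positivity)
  have hagD : ∀ t ≥ 1, t ≤ N → wag t ∈ Metric.closedBall (r 1) (15 / 4 * D) := by
    intro t ht
    induction t, ht using Nat.le_induction with
    | base => intro _; rw [hwag1]; exact Metric.mem_closedBall_self (by positivity)
    | succ t ht ih =>
      intro htN
      rw [hwagrec t ht]
      refine convex_closedBall (r 1) (15 / 4 * D) (ih (by omega)) ?_
        (by linarith [(hαrange t ht).2]) (hαrange t ht).1 (by ring)
      rw [mem_closedBall_iff_norm]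
      have h1 := hwD t ht (by omega)
      have h2 := hrD t ht (by omega)
      have e : w (t+1) - r 1 = (r t - ustar) - (r t - w (t+1)) - (r 1 - ustar) := by abel
      rw [e]
      have := norm_sub_le ((r t - ustar) - (r t - w (t+1))) (r 1 - ustar)
      have := norm_sub_le (r t - ustar) (r t - w (t+1))
      linarith
  have hK : 0 < (N:ℝ) * (N - 1) := mul_pos (by linarith) (by linarith)
  have hN1 : (0:ℝ) < N - 1 := by linarith
  have hN0 : (0:ℝ) < N := by linarith
  have hcoef : ∀ c : ℝ, c * LG / ((N : ℝ) * ((N : ℝ) - 1)) + c * LH / ((N : ℝ) - 1)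
      = c * M / ((N : ℝ) * ((N : ℝ) - 1)) := by
    intro c; rw [hM]; field_simp
  rw [hcoef, hcoef]
  refine ⟨(6 * M / ((N : ℝ) * ((N : ℝ) - 1))) • (r 1 - r N),
    45 * M / ((N : ℝ) * ((N : ℝ) - 1)) * D ^ 2, by positivity, ?_, ?_, le_rfl⟩
  · rw [hgt]
    haveI : Nonempty Z := hZne.to_subtype
    refine ciSup_le fun ⟨u, hu⟩ => ?_
    have h1 := inv N (by omega) le_rfl u hu
    have h2 := hagD N (by omega) le_rfl
    rw [mem_closedBall_iff_norm, norm_sub_rev] at h2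
    have h3 : ‖r 1 - wag N‖ ^ 2 ≤ 15 * D ^ 2 := by
      have := pow_le_pow_left₀ (norm_nonneg _) h2 2
      nlinarith
    have h4 : 0 ≤ ‖r N - wag N‖ ^ 2 := by positivity
    have e : ‖r 1 - u‖ ^ 2 - ‖r N - u‖ ^ 2 =
        ‖r 1 - wag N‖ ^ 2 - ‖r N - wag N‖ ^ 2 + 2 * ⟪r 1 - r N, wag N - u⟫ := by
      have a1 : r 1 - u = (r 1 - wag N) + (wag N - u) := by abel
      have a2 : r N - u = (r N - wag N) + (wag N - u) := by abel
      have a3 : r 1 - r N = (r 1 - wag N) - (r N - wag N) := by abel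
      rw [a1, a2, a3, @norm_add_sq_real, @norm_add_sq_real, inner_sub_left (r 1 - wag N) (r N - wag N)]
      ring
    rw [real_inner_smul_left]
    show Q (wag N) u - _ ≤ _
    have h5 : (N:ℝ) * (N - 1) / 2 * Q (wag N) u ≤
        3 * M / 2 * (15 * D ^ 2 + 2 * ⟪r 1 - r N, wag N - u⟫) := by
      have : 3 * M / 2 * (‖r 1 - u‖ ^ 2 - ‖r N - u‖ ^ 2) ≤
        3 * M / 2 * (15 * D ^ 2 + 2 * ⟪r 1 - r N, wag N - u⟫) := by
        gcongr; linarith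
      linarith
    rw [sub_le_iff_le_add, div_mul_eq_mul_div, div_mul_eq_mul_div, ← add_div, le_div_iff₀ hK]
    linarith
  · rw [norm_smul, Real.norm_of_nonneg (by positivity)]
    have h1 := hrD N (by omega) le_rfl
    have h2 : ‖r 1 - r N‖ ≤ 2 * D := by
      have e : r 1 - r N = (r 1 - ustar) - (r N - ustar) := by abel
      rw [e]
      have := norm_sub_le (r 1 - ustar) (r N - ustar)
      linarith
    calc _ ≤ 6 * M / ((N : ℝ) * ((N : ℝ) - 1)) * (2 * D) := by gcongr
      _ = _ := by ring
end

section
/- Let {θ_t} and {γ_t} be positive sequences, let w_1 ∈ Z, let {Δ^t} be an arbitrary sequence in E*, and define w_1^v = w_1 and w_{i+1}^v = argmin_{u∈Z} [−γ_i⟨Δ^i, u⟩ + V(w_i^v, u)] for i ≥ 1. Then for every t ≥ 1 and every u ∈ Z, Σ_{i=1}^t θ_i ⟨−Δ^i, w_i^v − u⟩ ≤ Σ_{i=1}^t (θ_i/γ_i)(V(w_i^v, u) − V(w_{i+1}^v, u)) + Σ_{i=1}^t (θ_i γ_i/(2μ)) ‖Δ^i‖_*². -/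
open Finset in
/-- technical bound on the weighted sum of perturbation terms. -/
theorem perturbation_sum_bound
    {E : Type*} [NormedAddCommGroup E] [NormedSpace ℝ E] [FiniteDimensional ℝ E]
    (Z : Set E) (hZne : Z.Nonempty) (hZcl : IsClosed Z) (hZcv : Convex ℝ Z)
    (μ : ℝ) (hμ : 0 < μ)
    (ω : E → ℝ) (Dω : E → E →L[ℝ] ℝ)
    (hωdiff : ∀ z ∈ Z, HasFDerivWithinAt ω (Dω z) Z z)
    (hωcont : ContinuousOn Dω Z)
    (hωsc : StrongConvexOn Z μ ω)
    (V : E → E → ℝ) (hV : ∀ z u, V z u = ω u - ω z - Dω z (u - z))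
    (hVlb : ∀ z ∈ Z, ∀ u ∈ Z, μ / 2 * ‖u - z‖ ^ 2 ≤ V z u)
    (θ γ : ℕ → ℝ) (hθpos : ∀ t ≥ 1, 0 < θ t) (hγpos : ∀ t ≥ 1, 0 < γ t)
    (Δ : ℕ → E →L[ℝ] ℝ)
    (w1 : E) (hw1Z : w1 ∈ Z)
    (wv : ℕ → E) (hwv1 : wv 1 = w1)
    (hwvZ : ∀ i ≥ 1, wv i ∈ Z)
    (hwvrec : ∀ i ≥ 1, IsMinOn (fun u => -(γ i * (Δ i) u) + V (wv i) u) Z (wv (i+1))) :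
    ∀ t ≥ 1, ∀ u ∈ Z,
      ∑ i ∈ Finset.Icc 1 t, θ i * (-(Δ i) (wv i - u)) ≤
        (∑ i ∈ Finset.Icc 1 t, θ i / γ i * (V (wv i) u - V (wv (i+1)) u))
          + ∑ i ∈ Finset.Icc 1 t, θ i * γ i / (2 * μ) * ‖Δ i‖ ^ 2 := by
  intro t _ u hu
  rw [← Finset.sum_add_distrib]
  refine Finset.sum_le_sum fun i hi => ?_
  have hi1 : 1 ≤ i := (Finset.mem_Icc.mp hi).1
  have hθ := hθpos i hi1
  have hγ := hγpos i hi1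
  have hw := hwvZ i hi1
  have hp := hwvZ (i+1) (by omega)
  have hmin := hwvrec i hi1
  have hlb := hVlb _ hw _ hp
  have hder : HasFDerivWithinAt (fun u => -(γ i * (Δ i) u) + V (wv i) u)
      (-(γ i • Δ i) + (Dω (wv (i+1)) - Dω (wv i))) Z (wv (i+1)) := by
    have h1 : HasFDerivWithinAt (fun u => -(γ i * (Δ i) u)) (-(γ i • Δ i)) Z (wv (i+1)) :=
      (((Δ i).hasFDerivWithinAt).const_mul (γ i)).neg
    have h2 : HasFDerivWithinAt (fun u => V (wv i) u) (Dω (wv (i+1)) - Dω (wv i)) Z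
        (wv (i+1)) := by
      have h3 : (fun u => V (wv i) u) =
          fun u => (ω u - (Dω (wv i)) u) + (- ω (wv i) + Dω (wv i) (wv i)) := by
        funext x
        rw [hV, map_sub]; ring
      rw [h3]
      exact ((hωdiff _ hp).sub (Dω (wv i)).hasFDerivWithinAt).add_const _
    exact h1.add h2
  have hopt := hmin.localize.hasFDerivWithinAt_nonneg hder
    (sub_mem_posTangentConeAt_of_segment_subset (hZcv.segment_subset hp hu))
  have hn : γ i * Δ i (wv (i+1) - wv i) ≤ γ i * (‖Δ i‖ * ‖wv (i+1) - wv i‖) :=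
    mul_le_mul_of_nonneg_left ((le_abs_self _).trans ((Δ i).le_opNorm _)) hγ.le
  have hy : γ i * (‖Δ i‖ * ‖wv (i+1) - wv i‖) ≤
      μ / 2 * ‖wv (i+1) - wv i‖ ^ 2 + γ i ^ 2 / (2 * μ) * ‖Δ i‖ ^ 2 := by
    have : μ / 2 * ‖wv (i+1) - wv i‖ ^ 2 + γ i ^ 2 / (2 * μ) * ‖Δ i‖ ^ 2
      - γ i * (‖Δ i‖ * ‖wv (i+1) - wv i‖)
      = (μ * ‖wv (i+1) - wv i‖ - γ i * ‖Δ i‖) ^ 2 / (2 * μ) := by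
      field_simp
      ring
    have h0 : 0 ≤ (μ * ‖wv (i+1) - wv i‖ - γ i * ‖Δ i‖) ^ 2 / (2 * μ) := by positivity
    linarith
  have key : γ i * (-(Δ i) (wv i - u)) ≤
      (V (wv i) u - V (wv (i+1)) u) + γ i ^ 2 / (2 * μ) * ‖Δ i‖ ^ 2 := by
    rw [hV] at hlb
    rw [hV, hV]
    simp only [add_apply, sub_apply, neg_apply, smul_apply, ContinuousLinearMap.add_apply, ContinuousLinearMap.sub_apply,
      ContinuousLinearMap.neg_apply, ContinuousLinearMap.smul_apply, smul_eq_mul, map_sub] at *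
    linarith
  have h := mul_le_mul_of_nonneg_left key (div_pos hθ hγ).le
  calc _ = θ i / γ i * (γ i * (-(Δ i) (wv i - u))) := by field_simp
    _ ≤ _ := h
    _ = _ := by field_simp
end

section
/- Suppose sup_{z₁,z₂∈Z} V(z₁, z₂) ≤ Ω_Z², α_1 = 1, 0 ≤ α_t < 1 for t > 1, γ_t > 0, and α_i/(Γ_i γ_i) ≤ α_{i+1}/(Γ_{i+1} γ_{i+1}) for all i ≥ 1. Then for any points r_1, …, r_{t+1} ∈ Z and every u ∈ Z, B_t(u, r_{[t]}) := Σ_{i=1}^t (α_i/(Γ_i γ_i)) (V(r_i, u) − V(r_{i+1}, u)) ≤ (α_t/(Γ_t γ_t)) Ω_Z². -/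
open Finset in
/-- bound on the telescoping Bregman-divergence sum `B_t`. -/
theorem amp_Bt_bound
    {E : Type*} [NormedAddCommGroup E] [NormedSpace ℝ E] [FiniteDimensional ℝ E]
    (Z : Set E) (hZne : Z.Nonempty) (hZcl : IsClosed Z) (hZcv : Convex ℝ Z)
    (μ : ℝ) (hμ : 0 < μ)
    (ω : E → ℝ) (Dω : E → E →L[ℝ] ℝ)
    (hωdiff : ∀ z ∈ Z, HasFDerivWithinAt ω (Dω z) Z z)
    (hωcont : ContinuousOn Dω Z)
    (hωsc : StrongConvexOn Z μ ω)
    (V : E → E → ℝ) (hV : ∀ z u, V z u = ω u - ω z - Dω z (u - z))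
    (hVnonneg : ∀ z ∈ Z, ∀ u ∈ Z, 0 ≤ V z u)
    (ΩZ : ℝ) (hΩ : ∀ z₁ ∈ Z, ∀ z₂ ∈ Z, V z₁ z₂ ≤ ΩZ ^ 2)
    (α γ : ℕ → ℝ) (hα1 : α 1 = 1) (hα : ∀ t ≥ 2, 0 ≤ α t ∧ α t < 1)
    (hγpos : ∀ t ≥ 1, 0 < γ t)
    (Γ : ℕ → ℝ) (hΓ1 : Γ 1 = 1) (hΓrec : ∀ t ≥ 2, Γ t = (1 - α t) * Γ (t-1))
    (hmono : ∀ i ≥ 1, α i / (Γ i * γ i) ≤ α (i+1) / (Γ (i+1) * γ (i+1)))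
    (r : ℕ → E) (hrZ : ∀ i ≥ 1, r i ∈ Z) :
    ∀ t ≥ 1, ∀ u ∈ Z,
      ∑ i ∈ Finset.Icc 1 t, α i / (Γ i * γ i) * (V (r i) u - V (r (i+1)) u) ≤
        α t / (Γ t * γ t) * ΩZ ^ 2 := by
  intro t ht u hu
  have hc1 : 0 ≤ α 1 / (Γ 1 * γ 1) := by
    rw [hα1, hΓ1, one_mul]
    exact (one_div_pos.mpr (hγpos 1 le_rfl)).le
  have key : ∀ t ≥ 1, 0 ≤ α t / (Γ t * γ t) ∧
      ∑ i ∈ Finset.Icc 1 t, α i / (Γ i * γ i) * (V (r i) u - V (r (i+1)) u) ≤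
        α t / (Γ t * γ t) * (ΩZ ^ 2 - V (r (t+1)) u) := by
    intro t ht
    induction t, ht using Nat.le_induction with
    | base =>
      refine ⟨hc1, ?_⟩
      rw [Finset.Icc_self, Finset.sum_singleton]
      have h := hΩ (r 1) (hrZ 1 le_rfl) u hu
      exact mul_le_mul_of_nonneg_left (by linarith) hc1
    | succ n hn ih =>
      obtain ⟨h0, h1⟩ := ih
      have hm := hmono n hn
      refine ⟨h0.trans hm, ?_⟩
      rw [Finset.sum_Icc_succ_top (by omega)]
      have h := hΩ (r (n+1)) (hrZ (n+1) (by omega)) u hu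
      have := mul_nonneg (sub_nonneg.mpr hm) (sub_nonneg.mpr h)
      linarith
  obtain ⟨h0, h1⟩ := key t ht
  refine h1.trans (mul_le_mul_of_nonneg_left ?_ h0)
  have := hVnonneg (r (t+1)) (hrZ (t+1) (by omega)) u hu
  linarith
end
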